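/- Let K belong to the class R and let t be a singular vertex of K. Let u ∈ lk(t,K) be a non-singular vertex such that lk(t,K) ∩ lk(u,K) − lk(ut,K) equals the half-open edge (t₁, w] or the single vertex {w}, where w is a vertex of lk(u,K) ∩ lk(t,K) − lk(ut,K) and t₁ ∈ lk(ut,K) is a singular vertex. Then d(tw) ≥ d(tu) and d(uw) ≥ d(tu). -/

import Mathlib

/-- An abstract simplicial complex on vertex set `ℕ`: a finite, downward closed
collection of nonempty finite sets of vertices. -/
structure SComplex where
  faces : Finset (Finset ℕ)
  not_empty_mem : ∅ ∉ faces
  down_closed : ∀ s ∈ faces, ∀ t ⊆ s, t ≠ ∅ → t ∈ faces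

namespace SComplex

/-- The set of vertices of the complex. -/
def vertexSet (K : SComplex) : Finset ℕ := K.faces.sup id

/-- `fnum K i` is the number of `i`-dimensional faces of `K`. -/
def fnum (K : SComplex) (i : ℕ) : ℕ := (K.faces.filter fun s => s.card = i + 1).card

/-- `g₂` for a 3-dimensional complex: `f₁ - 4 f₀ + 10`. -/
def g2 (K : SComplex) : ℤ := (K.fnum 1 : ℤ) - 4 * (K.fnum 0 : ℤ) + 10

/-- `g₂` for a 2-dimensional complex: `f₁ - 3 f₀ + 6`. -/
def g2surf (K : SComplex) : ℤ := (K.fnum 1 : ℤ) - 3 * (K.fnum 0 : ℤ) + 6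

/-- Euler characteristic of a (2-dimensional) complex. -/
def euler (K : SComplex) : ℤ := (K.fnum 0 : ℤ) - (K.fnum 1 : ℤ) + (K.fnum 2 : ℤ)

/-- The link of a face `σ`. -/
def lk (K : SComplex) (σ : Finset ℕ) : SComplex where
  faces := K.faces.filter fun γ => γ ∩ σ = ∅ ∧ γ ∪ σ ∈ K.faces
  not_empty_mem := fun h => K.not_empty_mem (Finset.mem_filter.mp h).1
  down_closed := by
    intro s hs t hts ht
    rw [Finset.mem_filter] at hs ⊢
    refine ⟨K.down_closed s hs.1 t hts ht, ?_, ?_⟩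
    · have h1 : t ∩ σ ⊆ s ∩ σ := Finset.inter_subset_inter hts (Finset.Subset.refl σ)
      rw [hs.2.1] at h1
      exact Finset.subset_empty.mp h1
    · refine K.down_closed (s ∪ σ) hs.2.2 (t ∪ σ)
        (Finset.union_subset_union hts (Finset.Subset.refl σ)) ?_
      intro hc
      exact ht (Finset.union_eq_empty.mp hc).1

/-- The (closed) star of a face `σ`. -/
def st (K : SComplex) (σ : Finset ℕ) : SComplex where
  faces := K.faces.filter fun α => α ∪ σ ∈ K.faces
  not_empty_mem := fun h => K.not_empty_mem (Finset.mem_filter.mp h).1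
  down_closed := by
    intro s hs t hts ht
    rw [Finset.mem_filter] at hs ⊢
    refine ⟨K.down_closed s hs.1 t hts ht, ?_⟩
    refine K.down_closed (s ∪ σ) hs.2 (t ∪ σ)
      (Finset.union_subset_union hts (Finset.Subset.refl σ)) ?_
    intro hc
    exact ht (Finset.union_eq_empty.mp hc).1

/-- A facet is a maximal face. -/
def IsFacet (K : SComplex) (s : Finset ℕ) : Prop :=
  s ∈ K.faces ∧ ∀ t ∈ K.faces, s ⊆ t → s = t

/-- A pure `d`-dimensional complex: all facets have `d+1` vertices. -/
def IsPure (K : SComplex) (d : ℕ) : Prop :=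
  K.faces.Nonempty ∧ ∀ s, K.IsFacet s → s.card = d + 1

/-- Two facets are adjacent if they share a codimension-one face. -/
def FacetAdj (K : SComplex) (s t : Finset ℕ) : Prop :=
  K.IsFacet s ∧ K.IsFacet t ∧ (s ∩ t).card + 1 = s.card

/-- Strong connectedness: any two facets are joined by a chain of facets, consecutive
ones sharing a codimension-one face. -/
def StronglyConnected (K : SComplex) : Prop :=
  ∀ s t, K.IsFacet s → K.IsFacet t → Relation.ReflTransGen K.FacetAdj s t

/-- Two vertices are adjacent if they span an edge. -/
def VertAdj (K : SComplex) (u v : ℕ) : Prop := ({u, v} : Finset ℕ) ∈ K.faces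

/-- Connectedness of a complex (via its 1-skeleton). -/
def Conn (K : SComplex) : Prop :=
  K.faces.Nonempty ∧
    ∀ u v, {u} ∈ K.faces → {v} ∈ K.faces → Relation.ReflTransGen K.VertAdj u v

/-- A normal `d`-pseudomanifold: pure, strongly connected, every `(d-1)`-face is in
exactly two facets, and links of faces of dimension at most `d-2` are connected. -/
def IsNormalPseudomanifold (K : SComplex) (d : ℕ) : Prop :=
  K.IsPure d ∧ K.StronglyConnected ∧
    (∀ s ∈ K.faces, s.card = d →
      (K.faces.filter fun F => F.card = d + 1 ∧ s ⊆ F).card = 2) ∧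
    (∀ s ∈ K.faces, s.card ≤ d - 1 → (K.lk s).Conn)

/-- The geometric realization `|K|`, as a subspace of `ℕ → ℝ`. -/
def realSpace (K : SComplex) : Set (ℕ → ℝ) :=
  {w | (∀ v, 0 ≤ w v) ∧ ∃ s ∈ K.faces, (∀ v, w v ≠ 0 → v ∈ s) ∧ ∑ v ∈ s, w v = 1}

/-- The link of the vertex `v` triangulates the `(d-1)`-sphere. -/
def HasSphereLink (K : SComplex) (d : ℕ) (v : ℕ) : Prop :=
  Nonempty (↥((K.lk {v}).realSpace) ≃ₜ
    ↥(Metric.sphere (0 : EuclideanSpace ℝ (Fin d)) 1))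

/-- A singular vertex of a normal 3-pseudomanifold: its link is not a 2-sphere. -/
def IsSingular (K : SComplex) (v : ℕ) : Prop :=
  {v} ∈ K.faces ∧ ¬ K.HasSphereLink 3 v

/-- `d(σ)`: the number of vertices of the link of `σ`. -/
def deg (K : SComplex) (σ : Finset ℕ) : ℕ := (K.lk σ).fnum 0

/-- The boundary complex of the simplex on vertex set `s`: all nonempty proper subsets. -/
def properFaces (s : Finset ℕ) : Finset (Finset ℕ) :=
  s.powerset.filter fun t => t ≠ ∅ ∧ t ≠ s

/-- All nonempty faces of the simplex on vertex set `s`. -/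
def simplexFaces (s : Finset ℕ) : Finset (Finset ℕ) :=
  s.powerset.filter fun t => t ≠ ∅

/-- Operation (A): a bistellar 2-move on an edge `uv` with `lk(uv) = ∂(abc)`, `abc ∉ K`. -/
def BistellarTwoMove (K K' : SComplex) : Prop :=
  ∃ u v a b c : ℕ,
    ({u, v} : Finset ℕ) ∈ K.faces ∧ u ≠ v ∧
    ({a, b, c} : Finset ℕ).card = 3 ∧
    u ∉ ({a, b, c} : Finset ℕ) ∧ v ∉ ({a, b, c} : Finset ℕ) ∧
    (K.lk {u, v}).faces = properFaces {a, b, c} ∧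
    ({a, b, c} : Finset ℕ) ∉ K.faces ∧
    K'.faces = ((K.faces.filter fun α => ¬ ({u, v} : Finset ℕ) ⊆ α) ∪
      simplexFaces (insert u {a, b, c})) ∪ simplexFaces (insert v {a, b, c})

/-- The faces of the boundary complex of a pure `d`-dimensional complex with face set `F`:
faces contained in some `(d-1)`-face lying in exactly one facet. -/
def bdryFaces (F : Finset (Finset ℕ)) (d : ℕ) : Finset (Finset ℕ) :=
  F.filter fun s => ∃ r ∈ F, s ⊆ r ∧ r.card = d ∧
    (F.filter fun t => t.card = d + 1 ∧ r ⊆ t).card = 1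

/-- The faces of the cone with apex `w` over the complex with face set `F`. -/
def coneFaces (w : ℕ) (F : Finset (Finset ℕ)) : Finset (Finset ℕ) :=
  (F ∪ F.image (insert w)) ∪ {{w}}

/-- `K₁` is obtained from the normal `d`-pseudomanifold `K` by contracting the
edge `uv` (satisfying the link condition): delete all faces containing `u` or `v`
and cone off the boundary of the result with a new vertex `w`. -/
def EdgeContractionAt (d : ℕ) (K : SComplex) (u v : ℕ) (K₁ : SComplex) : Prop :=
  ({u, v} : Finset ℕ) ∈ K.faces ∧ u ≠ v ∧
  (K.lk {u}).faces ∩ (K.lk {v}).faces = (K.lk {u, v}).faces ∧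
  ∃ w, w ∉ K.vertexSet ∧
    K₁.faces = (K.faces.filter fun α => u ∉ α ∧ v ∉ α) ∪
      coneFaces w (bdryFaces (K.faces.filter fun α => u ∉ α ∧ v ∉ α) d)

/-- Operation (B): an edge contraction in a 3-dimensional complex. -/
def EdgeContraction (K K₁ : SComplex) : Prop := ∃ u v, EdgeContractionAt 3 K u v K₁

/-- The class `R`: normal 3-pseudomanifolds with one or two singular vertices such that
(i) if `K` contains the boundary of a 3-simplex then it contains the 3-simplex and
(ii) no normal 3-pseudomanifold with smaller `g₂` is obtained from `K` by a
bistellar 2-move, an edge contraction, an edge expansion followed by a bistellar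
2-move, or an edge expansion followed by an edge contraction. -/
def InClassR (K : SComplex) : Prop :=
  K.IsNormalPseudomanifold 3 ∧
  1 ≤ {v | K.IsSingular v}.ncard ∧ {v | K.IsSingular v}.ncard ≤ 2 ∧
  (∀ s : Finset ℕ, s.card = 4 → (∀ t ∈ properFaces s, t ∈ K.faces) → s ∈ K.faces) ∧
  (∀ K' : SComplex, K'.IsNormalPseudomanifold 3 →
    (BistellarTwoMove K K' ∨ EdgeContraction K K' ∨
      (∃ M, EdgeContraction M K ∧ BistellarTwoMove M K') ∨
      (∃ M, EdgeContraction M K ∧ EdgeContraction M K')) →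
    K.g2 ≤ K'.g2)

/-!
Subdivide the edge `tw` of `K` at a new vertex `b`, writing `a` for the old vertex `t`, and call the
result `M`. Contracting `ab` gives back `K`. The faces violating the link condition for `tu` all
contain `w`, and `a` is not adjacent to `w` in `M`, so `au` can be contracted as well; call the
result `K'`. Contracting an edge `xy` changes `g₂` by `3 - d(xy)`, and the degrees of `ab` and `au`
in `M` are those of `tw` and `tu` in `K`, so `g₂(K') - g₂(K) = d(tw) - d(tu)`. Minimality of `g₂(K)`
among the complexes reachable by an expansion and a contraction makes this nonnegative. The bound
on `d(uw)` is the same with `t` and `u` exchanged.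

An arbitrary `K'` is recognized as a normal pseudomanifold through the stars of its simplices: for
a pure complex, strong connectedness and connectedness of the links together say that the facets
containing any given set of vertices are connected through common ridges containing that set.
-/

/-! ### Links and their vertices -/

/-- The vertices of the link of `s` in a family `F` of finite sets. Working with bare families lets
the same counting lemmas serve complexes and the families on which `bdryFaces` is defined. -/
def linkVertices (F : Finset (Finset ℕ)) (s : Finset ℕ) : Finset ℕ :=
  (F.sup id \ s).filter fun v => insert v s ∈ F

theorem mem_linkVertices {F : Finset (Finset ℕ)} {s : Finset ℕ} {v : ℕ} :
    v ∈ linkVertices F s ↔ v ∉ s ∧ insert v s ∈ F := by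
  simp only [linkVertices, Finset.mem_filter, Finset.mem_sdiff, Finset.mem_sup, id]
  exact ⟨fun h => ⟨h.1.2, h.2⟩, fun h => ⟨⟨⟨_, h.2, Finset.mem_insert_self v s⟩, h.1⟩, h.2⟩⟩

theorem mem_linkVertices_pair {F : Finset (Finset ℕ)} {x y v : ℕ} :
    v ∈ linkVertices F {x, y} ↔ v ≠ x ∧ v ≠ y ∧ insert x (insert y {v}) ∈ F := by
  have hinsert : insert v {x, y} = insert x (insert y ({v} : Finset ℕ)) := by
    rw [Finset.insert_comm, Finset.pair_comm v y]
  rw [mem_linkVertices, hinsert, Finset.mem_insert, Finset.mem_singleton, not_or, and_assoc]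

theorem card_filter_card_eq_and_subset (F : Finset (Finset ℕ)) {s : Finset ℕ} {d : ℕ}
    (hs : s.card = d) :
    (F.filter fun φ => φ.card = d + 1 ∧ s ⊆ φ).card = (linkVertices F s).card := by
  have himage : F.filter (fun φ => φ.card = d + 1 ∧ s ⊆ φ) =
      (linkVertices F s).image (insert · s) := by
    ext φ
    rw [Finset.mem_filter, and_comm (a := φ.card = _), ← hs, eq_comm (a := φ.card),
      ← Finset.exists_eq_insert_iff, Finset.mem_image]
    constructor
    · rintro ⟨hφ, v, hv, rfl⟩
      exact ⟨v, mem_linkVertices.2 ⟨hv, hφ⟩, rfl⟩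
    · rintro ⟨v, hv, rfl⟩
      rw [mem_linkVertices] at hv
      exact ⟨hv.2, v, hv.1, rfl⟩
  rw [himage, Finset.card_image_of_injOn]
  intro x hx y _ hxy
  exact Finset.insert_inj (mem_linkVertices.1 hx).1 |>.1 hxy

variable {K : SComplex}

theorem ext_faces {L : SComplex} (h : K.faces = L.faces) : K = L := by
  cases K; cases L; cases h; rfl

theorem mem_faces_of_subset {s φ : Finset ℕ} (hφ : φ ∈ K.faces) (hsφ : s ⊆ φ)
    (hs : s.Nonempty) : s ∈ K.faces :=
  K.down_closed φ hφ s hsφ hs.ne_empty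

theorem nonempty_of_mem_faces {s : Finset ℕ} (hs : s ∈ K.faces) : s.Nonempty :=
  Finset.nonempty_iff_ne_empty.2 fun h => K.not_empty_mem (h ▸ hs)

theorem linkVertices_eq_empty {s : Finset ℕ} (hs : s ∉ K.faces) (hne : s.Nonempty) :
    linkVertices K.faces s = ∅ :=
  Finset.eq_empty_of_forall_notMem fun _ hv =>
    hs (mem_faces_of_subset (mem_linkVertices.1 hv).2 (Finset.subset_insert _ s) hne)

theorem mem_lk {s γ : Finset ℕ} :
    γ ∈ (K.lk s).faces ↔ γ.Nonempty ∧ Disjoint γ s ∧ γ ∪ s ∈ K.faces := by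
  rw [lk, Finset.mem_filter, Finset.disjoint_iff_inter_eq_empty]
  exact ⟨fun h => ⟨nonempty_of_mem_faces h.1, h.2⟩,
    fun h => ⟨mem_faces_of_subset h.2.2 Finset.subset_union_left h.1, h.2⟩⟩

theorem singleton_mem_lk {s : Finset ℕ} {v : ℕ} :
    {v} ∈ (K.lk s).faces ↔ v ∉ s ∧ insert v s ∈ K.faces := by
  simp [mem_lk]

theorem vertAdj_lk {s : Finset ℕ} {x y : ℕ} :
    (K.lk s).VertAdj x y ↔ x ∉ s ∧ y ∉ s ∧ insert x (insert y s) ∈ K.faces := by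
  simp [VertAdj, mem_lk, and_assoc]

theorem VertAdj.symm {x y : ℕ} (h : K.VertAdj x y) : K.VertAdj y x := by
  rwa [VertAdj, Finset.pair_comm]

theorem lk_empty (K : SComplex) : K.lk ∅ = K :=
  ext_faces <| by
    ext s
    simpa [mem_lk] using nonempty_of_mem_faces

theorem mem_vertexSet {v : ℕ} : v ∈ K.vertexSet ↔ {v} ∈ K.faces := by
  rw [vertexSet, Finset.mem_sup]
  exact ⟨fun ⟨s, hs, hv⟩ => mem_faces_of_subset hs (Finset.singleton_subset_iff.2 hv)
    (Finset.singleton_nonempty v), fun h => ⟨_, h, Finset.mem_singleton_self v⟩⟩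

theorem subset_vertexSet {s : Finset ℕ} (hs : s ∈ K.faces) : s ⊆ K.vertexSet :=
  Finset.le_sup (f := id) hs

theorem notMem_of_notMem_vertexSet {s : Finset ℕ} {v : ℕ} (hv : v ∉ K.vertexSet)
    (hs : s ∈ K.faces) : v ∉ s :=
  fun h => hv (subset_vertexSet hs h)

theorem vertexSet_lk (K : SComplex) (s : Finset ℕ) :
    (K.lk s).vertexSet = linkVertices K.faces s := by
  ext v
  rw [mem_vertexSet, singleton_mem_lk, mem_linkVertices]

theorem fnum_zero (K : SComplex) : K.fnum 0 = K.vertexSet.card := by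
  have h := card_filter_card_eq_and_subset K.faces (Finset.card_empty (α := ℕ))
  rw [fnum, ← lk_empty K, vertexSet_lk, lk_empty, ← h]
  simp only [Finset.empty_subset, and_true]

theorem deg_eq_card_linkVertices (K : SComplex) (s : Finset ℕ) :
    K.deg s = (linkVertices K.faces s).card := by
  rw [deg, fnum_zero, vertexSet_lk]

/-! ### Stars, links and normality -/

section Normality

variable {K : SComplex} {d : ℕ} {s φ ψ : Finset ℕ}

/-- The `d`-dimensional faces of the star of `s`, for an arbitrary finite set `s`. -/
def starFacets (K : SComplex) (d : ℕ) (s : Finset ℕ) : Finset (Finset ℕ) :=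
  K.faces.filter fun φ => φ.card = d + 1 ∧ s ⊆ φ

theorem mem_starFacets : φ ∈ K.starFacets d s ↔ φ ∈ K.faces ∧ φ.card = d + 1 ∧ s ⊆ φ :=
  Finset.mem_filter

theorem starFacets_anti {t : Finset ℕ} (h : s ⊆ t) : K.starFacets d t ⊆ K.starFacets d s :=
  Finset.monotone_filter_right _ fun _ _ hφ => ⟨hφ.1, h.trans hφ.2⟩

/-- Two `d`-faces of the star of `s` are star-adjacent if they share at least `d` vertices; unlike
`FacetAdj`, the relation is reflexive on the star. -/
def StarAdj (K : SComplex) (d : ℕ) (s φ ψ : Finset ℕ) : Prop :=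
  φ ∈ K.starFacets d s ∧ ψ ∈ K.starFacets d s ∧ d ≤ (φ ∩ ψ).card

/-- The star of `s` is strongly connected. -/
def StarConnected (K : SComplex) (d : ℕ) (s : Finset ℕ) : Prop :=
  ∀ φ ∈ K.starFacets d s, ∀ ψ ∈ K.starFacets d s, Relation.ReflTransGen (K.StarAdj d s) φ ψ

/-- The 1-skeleton is connected or empty: `Conn` without nonemptiness. -/
def Preconn (K : SComplex) : Prop :=
  ∀ x y, {x} ∈ K.faces → {y} ∈ K.faces → Relation.ReflTransGen K.VertAdj x y

theorem StarAdj.anti {t : Finset ℕ} (h : s ⊆ t) : K.StarAdj d t ≤ K.StarAdj d s :=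
  fun _ _ hφψ => ⟨starFacets_anti h hφψ.1, starFacets_anti h hφψ.2.1, hφψ.2.2⟩

theorem IsPure.exists_mem_starFacets (hK : K.IsPure d) (hs : s ∈ K.faces) :
    ∃ φ, φ ∈ K.starFacets d s := by
  obtain ⟨φ, hsφ, hφ⟩ := K.faces.exists_le_maximal hs
  have hfacet : K.IsFacet φ := ⟨hφ.1, fun ψ hψ h => h.antisymm (hφ.2 hψ h)⟩
  exact ⟨φ, mem_starFacets.2 ⟨hφ.1, hK.2 φ hfacet, hsφ⟩⟩

theorem IsPure.card_le (hK : K.IsPure d) (hs : s ∈ K.faces) : s.card ≤ d + 1 := by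
  obtain ⟨φ, hφ⟩ := hK.exists_mem_starFacets hs
  rw [mem_starFacets] at hφ
  exact hφ.2.1 ▸ Finset.card_le_card hφ.2.2

theorem isPure_of_exists_mem_starFacets (hne : K.faces.Nonempty)
    (h : ∀ s ∈ K.faces, ∃ φ, φ ∈ K.starFacets d s) : K.IsPure d := by
  refine ⟨hne, fun s hs => ?_⟩
  obtain ⟨φ, hφ⟩ := h s hs.1
  rw [mem_starFacets] at hφ
  exact hs.2 φ hφ.1 hφ.2.2 ▸ hφ.2.1

theorem IsPure.isFacet_iff (hK : K.IsPure d) : K.IsFacet s ↔ s ∈ K.starFacets d ∅ := by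
  rw [mem_starFacets]
  refine ⟨fun hs => ⟨hs.1, hK.2 s hs, Finset.empty_subset s⟩, fun hs => ⟨hs.1, fun φ hφ hsφ => ?_⟩⟩
  exact Finset.eq_of_subset_of_card_le hsφ (hs.2.1 ▸ hK.card_le hφ)

theorem IsPure.facetAdj_iff (hK : K.IsPure d) :
    K.FacetAdj φ ψ ↔ K.StarAdj d ∅ φ ψ ∧ φ ≠ ψ := by
  rw [FacetAdj, StarAdj, hK.isFacet_iff, hK.isFacet_iff, and_assoc, and_assoc]
  refine and_congr_right fun hφ => and_congr_right fun hψ => ?_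
  rw [mem_starFacets] at hφ hψ
  have hle : d + 1 ≤ (φ ∩ ψ).card ↔ φ = ψ := by
    refine ⟨fun h => ?_, fun h => by rw [h, Finset.inter_self, hψ.2.1]⟩
    rw [← Finset.eq_of_subset_of_card_le Finset.inter_subset_left (hφ.2.1.trans_le h)]
    exact Finset.eq_of_subset_of_card_le Finset.inter_subset_right (hψ.2.1.trans_le h)
  rw [Ne, ← hle]
  omega

theorem IsPure.stronglyConnected_iff (hK : K.IsPure d) :
    K.StronglyConnected ↔ K.StarConnected d ∅ := by
  have hgen : Relation.ReflTransGen K.FacetAdj = Relation.ReflTransGen (K.StarAdj d ∅) := by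
    refine le_antisymm (Relation.ReflTransGen.mono fun φ ψ h => (hK.facetAdj_iff.1 h).1)
      (Relation.reflTransGen_closed fun φ ψ h => ?_)
    by_cases hφψ : φ = ψ
    · exact hφψ ▸ .refl
    · exact .single (hK.facetAdj_iff.2 ⟨h, hφψ⟩)
  simp only [StronglyConnected, StarConnected, hgen, hK.isFacet_iff]
  exact ⟨fun h φ hφ ψ hψ => h φ ψ hφ hψ, fun h φ ψ hφ hψ => h φ hφ ψ hψ⟩

theorem starConnected_of_le_card (hs : d ≤ s.card) : K.StarConnected d s := fun _ hφ _ hψ =>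
  .single ⟨hφ, hψ, hs.trans (Finset.card_le_card
    (Finset.subset_inter (mem_starFacets.1 hφ).2.2 (mem_starFacets.1 hψ).2.2))⟩

theorem exists_singleton_mem_lk (hs : s.card < d + 1) (hφ : φ ∈ K.starFacets d s) :
    ∃ x ∈ φ, {x} ∈ (K.lk s).faces := by
  rw [mem_starFacets] at hφ
  obtain ⟨x, hx, hxs⟩ := Finset.exists_mem_notMem_of_card_lt_card (hφ.2.1 ▸ hs)
  exact ⟨x, hx, singleton_mem_lk.2 ⟨hxs, mem_faces_of_subset hφ.1
    (Finset.insert_subset hx hφ.2.2) (Finset.insert_nonempty x s)⟩⟩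

theorem insert_mem_starFacets {x : ℕ} (hφ : φ ∈ K.starFacets d s) (hx : x ∈ φ) :
    φ ∈ K.starFacets d (insert x s) := by
  rw [mem_starFacets] at hφ ⊢
  exact ⟨hφ.1, hφ.2.1, Finset.insert_subset hx hφ.2.2⟩

theorem IsPure.starConnected_of_preconn_lk (hK : K.IsPure d)
    (hlk : ∀ s, s.card < d → (K.lk s).Preconn) (s : Finset ℕ) : K.StarConnected d s := by
  induction hn : d - s.card generalizing s with
  | zero => exact starConnected_of_le_card (by omega)
  | succ n ih =>
    have hstar {x : ℕ} (hx : {x} ∈ (K.lk s).faces) : K.StarConnected d (insert x s) :=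
      ih _ (by rw [Finset.card_insert_of_notMem (singleton_mem_lk.1 hx).1]; omega)
    intro φ hφ ψ hψ
    obtain ⟨x, hxφ, hx⟩ := exists_singleton_mem_lk (by omega) hφ
    obtain ⟨y, hyψ, hy⟩ := exists_singleton_mem_lk (by omega) hψ
    have hmono (z : ℕ) := Relation.ReflTransGen.mono (StarAdj.anti (K := K) (d := d)
      (Finset.subset_insert z s))
    suffices h : ∀ z, Relation.ReflTransGen (K.lk s).VertAdj x z →
        ∀ χ ∈ K.starFacets d (insert z s), Relation.ReflTransGen (K.StarAdj d s) φ χ from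
      h y (hlk s (by omega) x y hx hy) ψ (insert_mem_starFacets hψ hyψ)
    intro z hz
    induction hz with
    | refl => exact fun χ hχ => hmono x _ _ (hstar hx φ (insert_mem_starFacets hφ hxφ) χ hχ)
    | @tail z z' _ hadj ihz =>
      intro χ hχ
      have hz' : {z'} ∈ (K.lk s).faces :=
        mem_faces_of_subset hadj (by simp) (Finset.singleton_nonempty z')
      obtain ⟨ρ, hρ⟩ := hK.exists_mem_starFacets (vertAdj_lk.1 hadj).2.2
      have hρz := starFacets_anti (Finset.insert_subset_insert z (Finset.subset_insert z' s)) hρ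
      have hρz' := starFacets_anti (Finset.subset_insert z (insert z' s)) hρ
      exact (ihz ρ hρz).trans (hmono z' _ _ (hstar hz' ρ hρz' χ hχ))

theorem StarConnected.preconn_lk (hK : K.IsPure d) (hs : s.card < d)
    (hstar : K.StarConnected d s) : (K.lk s).Preconn := by
  have hadj {χ : Finset ℕ} {p q : ℕ} (hχ : χ ∈ K.starFacets d s) (hp : p ∈ χ \ s)
      (hq : q ∈ χ \ s) : (K.lk s).VertAdj p q := by
    rw [Finset.mem_sdiff] at hp hq
    rw [mem_starFacets] at hχ
    exact vertAdj_lk.2 ⟨hp.2, hq.2, mem_faces_of_subset hχ.1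
      (Finset.insert_subset hp.1 (Finset.insert_subset hq.1 hχ.2.2)) (Finset.insert_nonempty _ _)⟩
  intro x y hx hy
  rw [singleton_mem_lk] at hx hy
  obtain ⟨φ, hφ⟩ := hK.exists_mem_starFacets hx.2
  obtain ⟨ψ, hψ⟩ := hK.exists_mem_starFacets hy.2
  have hanti (v : ℕ) : K.starFacets d (insert v s) ⊆ K.starFacets d s :=
    starFacets_anti (Finset.subset_insert v s)
  have hvert {v : ℕ} {χ : Finset ℕ} (hv : v ∉ s) (hχ : χ ∈ K.starFacets d (insert v s)) :
      v ∈ χ \ s :=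
    Finset.mem_sdiff.2 ⟨(mem_starFacets.1 hχ).2.2 (Finset.mem_insert_self v s), hv⟩
  suffices h : ∀ χ, Relation.ReflTransGen (K.StarAdj d s) φ χ → ∀ z ∈ χ \ s,
      Relation.ReflTransGen (K.lk s).VertAdj x z from
    h ψ (hstar φ (hanti x hφ) ψ (hanti y hψ)) y (hvert hy.1 hψ)
  intro χ hχ
  induction hχ with
  | refl => exact fun z hz => .single (hadj (hanti x hφ) (hvert hx.1 hφ) hz)
  | @tail χ χ' _ hχχ' ihχ =>
    intro z hz
    obtain ⟨p, hp, hps⟩ := Finset.exists_mem_notMem_of_card_lt_card (hs.trans_le hχχ'.2.2)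
    rw [Finset.mem_inter] at hp
    exact (ihχ p (Finset.mem_sdiff.2 ⟨hp.1, hps⟩)).tail
      (hadj hχχ'.2.1 (Finset.mem_sdiff.2 ⟨hp.2, hps⟩) hz)

theorem IsPure.lk_nonempty (hK : K.IsPure d) (hs : s ∈ K.faces) (hcard : s.card < d + 1) :
    (K.lk s).faces.Nonempty := by
  obtain ⟨φ, hφ⟩ := hK.exists_mem_starFacets hs
  obtain ⟨x, -, hx⟩ := exists_singleton_mem_lk hcard hφ
  exact ⟨_, hx⟩

theorem preconn_lk_of_notMem (hs : s ∉ K.faces) (hne : s.Nonempty) : (K.lk s).Preconn :=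
  fun x _ hx => by
    rw [← mem_vertexSet, vertexSet_lk, linkVertices_eq_empty hs hne] at hx
    exact absurd hx (Finset.notMem_empty x)

theorem isNormalPseudomanifold_iff_preconn_lk :
    K.IsNormalPseudomanifold d ↔ K.IsPure d ∧
      (∀ r ∈ K.faces, r.card = d → (linkVertices K.faces r).card = 2) ∧
      ∀ s, s.card < d → (K.lk s).Preconn := by
  refine and_congr_right fun hpure => ?_
  have hridge : (∀ r ∈ K.faces, r.card = d →
      (K.faces.filter fun φ => φ.card = d + 1 ∧ r ⊆ φ).card = 2) ↔
      ∀ r ∈ K.faces, r.card = d → (linkVertices K.faces r).card = 2 :=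
    forall₂_congr fun r _ => forall_congr' fun hr => by rw [card_filter_card_eq_and_subset _ hr]
  rw [hridge, hpure.stronglyConnected_iff]
  constructor
  · rintro ⟨hstrong, hridge, hconn⟩
    refine ⟨hridge, fun s hs => ?_⟩
    rcases s.eq_empty_or_nonempty with rfl | hne
    · exact hstrong.preconn_lk hpure hs
    by_cases hsK : s ∈ K.faces
    · exact (hconn s hsK (by omega)).2
    · exact preconn_lk_of_notMem hsK hne
  · rintro ⟨hridge, hlk⟩
    refine ⟨hpure.starConnected_of_preconn_lk hlk ∅, hridge, fun s hs hcard => ?_⟩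
    have hpos := (nonempty_of_mem_faces hs).card_pos
    exact ⟨hpure.lk_nonempty hs (by omega), hlk s (by omega)⟩

theorem isNormalPseudomanifold_iff_starConnected :
    K.IsNormalPseudomanifold d ↔ K.IsPure d ∧
      (∀ r ∈ K.faces, r.card = d → (linkVertices K.faces r).card = 2) ∧
      ∀ s, K.StarConnected d s := by
  rw [isNormalPseudomanifold_iff_preconn_lk]
  exact and_congr_right fun hpure => and_congr_right fun _ =>
    ⟨hpure.starConnected_of_preconn_lk, fun h s hs => (h s).preconn_lk hpure hs⟩

theorem IsNormalPseudomanifold.preconn_lk (hK : K.IsNormalPseudomanifold d) (hs : s.card < d) :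
    (K.lk s).Preconn :=
  (isNormalPseudomanifold_iff_preconn_lk.1 hK).2.2 s hs

theorem IsNormalPseudomanifold.card_linkVertices (hK : K.IsNormalPseudomanifold d)
    (hs : s ∈ K.faces) (hcard : s.card = d) : (linkVertices K.faces s).card = 2 :=
  (isNormalPseudomanifold_iff_preconn_lk.1 hK).2.1 s hs hcard

end Normality

/-! ### Punctured links -/

theorem exists_reachable_odd_ncard_neighborSet {V : Type*} (G : SimpleGraph V)
    (hfin : G.support.Finite) {u : V} (hu : Odd (G.neighborSet u).ncard) :
    ∃ v ≠ u, G.Reachable u v ∧ Odd (G.neighborSet v).ncard := by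
  classical
  let S : Set V := {v | G.Reachable u v}
  have hS : S.Finite := (hfin.insert u).subset fun v hv => by
    by_cases hvu : v = u
    · exact Or.inl hvu
    · exact Or.inr (SimpleGraph.mem_support_of_reachable hvu hv.symm)
  have := hS.fintype
  have hnbr (v : S) : G.neighborSet v ⊆ S := fun w hw => v.2.trans (SimpleGraph.Adj.reachable hw)
  have hdeg (v : S) : (G.induce S).degree v = (G.neighborSet v).ncard := by
    have himage : Subtype.val '' (G.induce S).neighborSet v = G.neighborSet v := by
      ext w
      exact ⟨fun ⟨_, hw, hwv⟩ => hwv ▸ hw, fun hw => ⟨⟨w, hnbr v hw⟩, hw, rfl⟩⟩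
    rw [← himage, Set.ncard_image_of_injective _ Subtype.val_injective,
      ← SimpleGraph.card_neighborSet_eq_degree, Set.ncard_eq_toFinset_card', Set.toFinset_card]
  obtain ⟨v, hvu, hv⟩ := (G.induce S).exists_ne_odd_degree_of_exists_odd_degree
    ⟨u, SimpleGraph.Reachable.refl u⟩ (by rwa [hdeg])
  exact ⟨v, fun h => hvu (Subtype.ext h), v.2, by rwa [hdeg] at hv⟩

section PuncturedLinks

variable {K : SComplex} {d : ℕ} {s : Finset ℕ} {v x y : ℕ}

/-- The 1-skeleton of `K` with the vertex `v` deleted, as a graph on all of `ℕ`. -/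
def puncturedSkeleton (K : SComplex) (v : ℕ) : SimpleGraph ℕ where
  Adj x y := x ≠ y ∧ x ≠ v ∧ y ≠ v ∧ K.VertAdj x y
  symm := ⟨fun _ _ h => ⟨h.1.symm, h.2.2.1, h.2.1, h.2.2.2.symm⟩⟩
  loopless := ⟨fun _ h => h.1 rfl⟩

theorem puncturedSkeleton_reachable_of_vertAdj (hx : x ≠ v) (hy : y ≠ v) (h : K.VertAdj x y) :
    (K.puncturedSkeleton v).Reachable x y := by
  by_cases hxy : x = y
  · exact hxy ▸ .refl x
  · exact SimpleGraph.Adj.reachable ⟨hxy, hx, hy, h⟩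

theorem VertAdj.singleton_mem (h : K.VertAdj x y) : {x} ∈ K.faces :=
  mem_faces_of_subset h (by simp) (Finset.singleton_nonempty x)

theorem support_puncturedSkeleton_subset :
    (K.puncturedSkeleton v).support ⊆ K.vertexSet :=
  fun _ ⟨_, h⟩ => mem_vertexSet.2 h.2.2.2.singleton_mem

theorem mem_linkVertices_insert (hx : {x} ∈ (K.lk s).faces) :
    y ∈ linkVertices K.faces (insert x s) ↔ y ≠ x ∧ (K.lk s).VertAdj x y := by
  have := (singleton_mem_lk.1 hx).1
  rw [mem_linkVertices, vertAdj_lk, Finset.mem_insert, Finset.insert_comm]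
  tauto

theorem neighborSet_puncturedSkeleton_lk (hx : {x} ∈ (K.lk s).faces) (hxv : x ≠ v) :
    ((K.lk s).puncturedSkeleton v).neighborSet x =
      (linkVertices K.faces (insert x s)).erase v := by
  ext y
  simp only [Finset.mem_coe, Finset.mem_erase, mem_linkVertices_insert hx]
  exact ⟨fun h => ⟨h.2.2.1, h.1.symm, h.2.2.2⟩, fun h => ⟨h.2.1.symm, hxv, h.1, h.2.2⟩⟩

theorem IsNormalPseudomanifold.card_linkVertices_insert (hK : K.IsNormalPseudomanifold d)
    (hs : s.card + 1 = d) (hx : {x} ∈ (K.lk s).faces) :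
    (linkVertices K.faces (insert x s)).card = 2 := by
  rw [singleton_mem_lk] at hx
  exact hK.card_linkVertices hx.2 (by rw [Finset.card_insert_of_notMem hx.1, hs])

theorem IsNormalPseudomanifold.odd_ncard_neighborSet_iff (hK : K.IsNormalPseudomanifold d)
    (hs : s.card + 1 = d) (hx : {x} ∈ (K.lk s).faces) (hxv : x ≠ v) :
    Odd (((K.lk s).puncturedSkeleton v).neighborSet x).ncard ↔ (K.lk s).VertAdj x v := by
  have hv : v ∈ linkVertices K.faces (insert x s) ↔ (K.lk s).VertAdj x v := by
    rw [mem_linkVertices_insert hx, and_iff_right hxv.symm]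
  rw [neighborSet_puncturedSkeleton_lk hx hxv, Set.ncard_coe_finset, Finset.card_erase_eq_ite,
    hK.card_linkVertices_insert hs hx, ← hv]
  split_ifs with h <;> simp [h]

/-- In the cycle `lk s`, deleting `v` leaves a graph whose only vertices of odd degree are the two
neighbours of `v`, so the handshake lemma puts them in the same component. -/
theorem IsNormalPseudomanifold.reachable_of_vertAdj_of_card_add_one_eq
    (hK : K.IsNormalPseudomanifold d) (hs : s.card + 1 = d) (hx : x ≠ v) (hy : y ≠ v)
    (hvx : (K.lk s).VertAdj v x) (hvy : (K.lk s).VertAdj v y) :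
    ((K.lk s).puncturedSkeleton v).Reachable x y := by
  obtain ⟨r, hrx, hreach, hr⟩ := exists_reachable_odd_ncard_neighborSet _
    ((Finset.finite_toSet _).subset support_puncturedSkeleton_subset)
    ((hK.odd_ncard_neighborSet_iff hs hvx.symm.singleton_mem hx).2 hvx.symm)
  obtain ⟨_, _, hrv, _, hadj⟩ := SimpleGraph.mem_support_of_reachable hrx hreach.symm
  have hvr := ((hK.odd_ncard_neighborSet_iff hs hadj.singleton_mem hrv).1 hr).symm
  have hmem {z : ℕ} (hz : z ≠ v) (hvz : (K.lk s).VertAdj v z) :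
      z ∈ linkVertices K.faces (insert v s) :=
    (mem_linkVertices_insert hvx.singleton_mem).2 ⟨hz, hvz⟩
  by_cases hyx : y = x
  · exact hyx ▸ .refl y
  by_cases hyr : y = r
  · exact hyr ▸ hreach
  have htwo : 2 < (linkVertices K.faces (insert v s)).card :=
    Finset.two_lt_card.2 ⟨x, hmem hx hvx, y, hmem hy hvy, r, hmem hrv hvr, Ne.symm hyx, hrx.symm,
      hyr⟩
  exact absurd htwo (hK.card_linkVertices_insert hs hvx.singleton_mem).not_gt

theorem reachable_of_preconn_lk_insert (hlk : (K.lk (insert v s)).Preconn) (hx : x ≠ v)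
    (hy : y ≠ v) (hvx : (K.lk s).VertAdj v x) (hvy : (K.lk s).VertAdj v y) :
    ((K.lk s).puncturedSkeleton v).Reachable x y := by
  have hsingleton {p : ℕ} (hp : p ≠ v) (hvp : (K.lk s).VertAdj v p) :
      {p} ∈ (K.lk (insert v s)).faces := by
    rw [vertAdj_lk] at hvp
    rw [singleton_mem_lk, Finset.insert_comm, Finset.mem_insert, not_or]
    exact ⟨⟨hp, hvp.2.1⟩, hvp.2.2⟩
  have hadj {p q : ℕ} (hpq : (K.lk (insert v s)).VertAdj p q) :
      ((K.lk s).puncturedSkeleton v).Reachable p q := by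
    simp only [vertAdj_lk, Finset.mem_insert, not_or] at hpq
    exact puncturedSkeleton_reachable_of_vertAdj hpq.1.1 hpq.2.1.1 (vertAdj_lk.2 ⟨hpq.1.2,
      hpq.2.1.2, mem_faces_of_subset hpq.2.2 (by grind) (Finset.insert_nonempty _ _)⟩)
  suffices h : ∀ z, Relation.ReflTransGen (K.lk (insert v s)).VertAdj x z →
      ((K.lk s).puncturedSkeleton v).Reachable x z from
    h y (hlk x y (hsingleton hx hvx) (hsingleton hy hvy))
  intro z hz
  induction hz with
  | refl => exact .refl x
  | tail _ hpq ih => exact ih.trans (hadj hpq)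

theorem IsNormalPseudomanifold.reachable_of_vertAdj (hK : K.IsNormalPseudomanifold d)
    (hs : s.card < d) (hx : x ≠ v) (hy : y ≠ v) (hvx : (K.lk s).VertAdj v x)
    (hvy : (K.lk s).VertAdj v y) : ((K.lk s).puncturedSkeleton v).Reachable x y := by
  obtain hs | hs := Nat.lt_or_eq_of_le (Nat.succ_le_of_lt hs)
  · exact reachable_of_preconn_lk_insert
      (hK.preconn_lk ((Finset.card_insert_le v s).trans_lt hs)) hx hy hvx hvy
  · exact hK.reachable_of_vertAdj_of_card_add_one_eq hs hx hy hvx hvy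

theorem IsNormalPseudomanifold.reachable_puncturedSkeleton_lk (hK : K.IsNormalPseudomanifold d)
    (hs : s.card < d) (hx : {x} ∈ (K.lk s).faces) (hy : {y} ∈ (K.lk s).faces) (hxv : x ≠ v)
    (hyv : y ≠ v) : ((K.lk s).puncturedSkeleton v).Reachable x y := by
  suffices h : ∀ z, Relation.ReflTransGen (K.lk s).VertAdj x z →
      (z ≠ v → ((K.lk s).puncturedSkeleton v).Reachable x z) ∧
      (z = v → ∀ q ≠ v, (K.lk s).VertAdj v q → ((K.lk s).puncturedSkeleton v).Reachable x q) from
    (h y (hK.preconn_lk hs x y hx hy)).1 hyv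
  intro z hz
  induction hz with
  | refl => exact ⟨fun _ => .refl x, fun h => absurd h hxv⟩
  | @tail p q _ hpq ih =>
    by_cases hp : p = v
    · subst hp
      exact ⟨fun hq => ih.2 rfl q hq hpq, fun _ => ih.2 rfl⟩
    · refine ⟨fun hq => (ih.1 hp).trans (puncturedSkeleton_reachable_of_vertAdj hp hq hpq), ?_⟩
      rintro rfl r hr hqr
      exact (ih.1 hp).trans (hK.reachable_of_vertAdj hs hp hr hpq.symm hqr)

end PuncturedLinks

/-! ### Edge contractions -/

section Contraction

/-- The image of `K` under a map of its vertices. -/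
def map (f : ℕ → ℕ) (K : SComplex) : SComplex where
  faces := K.faces.image (Finset.image f)
  not_empty_mem := by
    simpa [Finset.mem_image] using K.not_empty_mem
  down_closed := by
    simp only [Finset.mem_image]
    rintro _ ⟨σ, hσ, rfl⟩ τ hτ hne
    obtain ⟨ρ, hρ, rfl⟩ := Finset.subset_image_iff.1 hτ
    exact ⟨ρ, K.down_closed σ hσ ρ hρ (by rintro rfl; exact hne (Finset.image_empty f)), rfl⟩

/-- The vertex map identifying `a` and `b` to `c`. -/
def collapse (a b c v : ℕ) : ℕ := if v = a ∨ v = b then c else v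

/-- The complex obtained from `M` by identifying the vertices `a` and `b` to a vertex `c`. -/
def contract (M : SComplex) (a b c : ℕ) : SComplex := M.map (collapse a b c)

/-- The edge `ab` of `M` satisfies the link condition `lk a ∩ lk b = lk ab`, and `c` is available
as the name of the vertex to which it is contracted. -/
structure IsContractible (M : SComplex) (a b c : ℕ) : Prop where
  ne : a ≠ b
  mem : {a, b} ∈ M.faces
  link : ∀ γ, a ∉ γ → b ∉ γ → insert a γ ∈ M.faces → insert b γ ∈ M.faces →
    insert a (insert b γ) ∈ M.faces
  fresh : c ∉ M.vertexSet

variable {M : SComplex} {a b c d : ℕ} {σ τ s : Finset ℕ}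

theorem contract_comm (M : SComplex) (a b c : ℕ) : M.contract a b c = M.contract b a c := by
  have h : collapse a b c = collapse b a c := funext fun v => by simp only [collapse, or_comm]
  rw [contract, h, contract]

theorem mem_contract : τ ∈ (M.contract a b c).faces ↔ ∃ σ ∈ M.faces, σ.image (collapse a b c) = τ :=
  Finset.mem_image

theorem image_collapse_of_notMem (ha : a ∉ σ) (hb : b ∉ σ) : σ.image (collapse a b c) = σ := by
  refine (Finset.image_congr fun v hv => ?_).trans Finset.image_id
  have : ¬(v = a ∨ v = b) := by rintro (rfl | rfl) <;> contradiction
  simp [collapse, this]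

theorem image_collapse_of_mem (h : a ∈ σ ∨ b ∈ σ) :
    σ.image (collapse a b c) = insert c (σ \ {a, b}) := by
  ext v
  simp only [Finset.mem_image, collapse, Finset.mem_insert, Finset.mem_sdiff,
    Finset.mem_singleton]
  constructor
  · rintro ⟨w, hw, rfl⟩
    grind
  · rintro (rfl | hv)
    · obtain h | h := h
      exacts [⟨a, h, by simp⟩, ⟨b, h, by simp⟩]
    · exact ⟨v, hv.1, if_neg hv.2⟩

theorem collapse_injOn (hc : c ∉ σ) (h : a ∉ σ ∨ b ∉ σ) : Set.InjOn (collapse a b c) σ := by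
  intro x hx y hy hxy
  simp only [collapse] at hxy
  grind

theorem mem_contract_of_notMem (hc : c ∉ τ) :
    τ ∈ (M.contract a b c).faces ↔ τ ∈ M.faces ∧ a ∉ τ ∧ b ∉ τ := by
  rw [mem_contract]
  constructor
  · rintro ⟨σ, hσ, rfl⟩
    by_cases hab : a ∈ σ ∨ b ∈ σ
    · exact absurd (by rw [image_collapse_of_mem hab]; exact Finset.mem_insert_self _ _) hc
    · rw [not_or] at hab
      rw [image_collapse_of_notMem hab.1 hab.2]
      exact ⟨hσ, hab⟩
  · rintro ⟨hτ, ha, hb⟩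
    exact ⟨τ, hτ, image_collapse_of_notMem ha hb⟩

theorem collapse_eq_iff {v : ℕ} (hv : v ≠ c) :
    collapse a b c v = c ↔ v = a ∨ v = b := by
  simp [collapse, hv, or_iff_not_imp_left]

namespace IsContractible

theorem symm (h : M.IsContractible a b c) : M.IsContractible b a c where
  ne := h.ne.symm
  mem := Finset.pair_comm a b ▸ h.mem
  link γ hb ha hbγ haγ := Finset.insert_comm a b γ ▸ h.link γ ha hb haγ hbγ
  fresh := h.fresh

theorem insert_mem_contract (h : M.IsContractible a b c) (hc : c ∉ τ) :
    insert c τ ∈ (M.contract a b c).faces ↔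
      a ∉ τ ∧ b ∉ τ ∧ (insert a τ ∈ M.faces ∨ insert b τ ∈ M.faces) := by
  rw [mem_contract]
  constructor
  · rintro ⟨σ, hσ, hστ⟩
    have hcσ := notMem_of_notMem_vertexSet h.fresh hσ
    by_cases hab : a ∈ σ ∨ b ∈ σ
    · rw [image_collapse_of_mem hab] at hστ
      obtain rfl : σ \ {a, b} = τ := by
        rw [← Finset.erase_insert hc, ← hστ, Finset.erase_insert (by simp [hcσ])]
      refine ⟨by simp, by simp, hab.imp (fun ha => ?_) fun hb => ?_⟩
      · exact mem_faces_of_subset hσ (Finset.insert_subset ha Finset.sdiff_subset) (by simp)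
      · exact mem_faces_of_subset hσ (Finset.insert_subset hb Finset.sdiff_subset) (by simp)
    · rw [not_or] at hab
      rw [image_collapse_of_notMem hab.1 hab.2] at hστ
      exact absurd (hστ ▸ Finset.mem_insert_self c τ) hcσ
  · rintro ⟨ha, hb, haτ | hbτ⟩
    · refine ⟨_, haτ, ?_⟩
      rw [image_collapse_of_mem (by simp)]
      grind
    · refine ⟨_, hbτ, ?_⟩
      rw [image_collapse_of_mem (by simp)]
      grind

end IsContractible

theorem IsNormalPseudomanifold.exists_mem_starFacets_notMem (hM : M.IsNormalPseudomanifold d)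
    (hσ : σ ∈ M.faces) (hb : b ∉ σ) : ∃ φ ∈ M.starFacets d σ, b ∉ φ := by
  obtain ⟨φ, hφ⟩ := hM.1.exists_mem_starFacets hσ
  by_cases hbφ : b ∈ φ
  swap
  · exact ⟨φ, hφ, hbφ⟩
  rw [mem_starFacets] at hφ
  have hσ' : σ ⊆ φ.erase b := Finset.subset_erase.2 ⟨hφ.2.2, hb⟩
  have hr := mem_faces_of_subset hφ.1 (Finset.erase_subset b φ)
    ((nonempty_of_mem_faces hσ).mono hσ')
  have hcard : (φ.erase b).card = d := by rw [Finset.card_erase_of_mem hbφ, hφ.2.1]; rfl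
  obtain ⟨v, hv, hvb⟩ := Finset.exists_mem_ne
    (Nat.one_lt_two.trans_eq (hM.card_linkVertices hr hcard).symm) b
  rw [mem_linkVertices] at hv
  refine ⟨_, mem_starFacets.2 ⟨hv.2, by rw [Finset.card_insert_of_notMem hv.1, hcard],
    hσ'.trans (Finset.subset_insert _ _)⟩, ?_⟩
  simp [hvb.symm]

namespace IsContractible

theorem exists_image_eq (hτ : τ ∈ (M.contract a b c).faces) (hab : a ≠ b) :
    ∃ σ ∈ M.faces, (a ∉ σ ∨ b ∉ σ) ∧ σ.image (collapse a b c) = τ := by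
  obtain ⟨σ, hσ, rfl⟩ := mem_contract.1 hτ
  by_cases h : a ∈ σ ∧ b ∈ σ
  · have ha : a ∈ σ.erase b := Finset.mem_erase.2 ⟨hab, h.1⟩
    refine ⟨σ.erase b, mem_faces_of_subset hσ (Finset.erase_subset b σ) ⟨a, ha⟩,
      Or.inr (Finset.notMem_erase b σ), ?_⟩
    rw [image_collapse_of_mem (.inl ha), image_collapse_of_mem (.inl h.1)]
    grind
  · exact ⟨σ, hσ, not_and_or.1 h, rfl⟩

theorem isPure_contract (h : M.IsContractible a b c) (hM : M.IsNormalPseudomanifold d) :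
    (M.contract a b c).IsPure d := by
  refine isPure_of_exists_mem_starFacets (hM.1.1.image _) fun τ hτ => ?_
  obtain ⟨σ, hσ, hab, rfl⟩ := exists_image_eq hτ h.ne
  obtain ⟨φ, hφ, hφab⟩ : ∃ φ ∈ M.starFacets d σ, a ∉ φ ∨ b ∉ φ := by
    rcases hab with ha | hb
    · obtain ⟨φ, hφ, haφ⟩ := hM.exists_mem_starFacets_notMem hσ ha
      exact ⟨φ, hφ, .inl haφ⟩
    · obtain ⟨φ, hφ, hbφ⟩ := hM.exists_mem_starFacets_notMem hσ hb
      exact ⟨φ, hφ, .inr hbφ⟩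
  rw [mem_starFacets] at hφ
  have hcφ := notMem_of_notMem_vertexSet h.fresh hφ.1
  exact ⟨φ.image (collapse a b c), mem_starFacets.2 ⟨mem_contract.2 ⟨φ, hφ.1, rfl⟩,
    (Finset.card_image_of_injOn (collapse_injOn hcφ hφab)).trans hφ.2.1,
    Finset.image_subset_image hφ.2.2⟩⟩

theorem linkVertices_contract_of_notMem (h : M.IsContractible a b c) (hc : c ∉ τ) (ha : a ∉ τ)
    (hb : b ∉ τ) : linkVertices (M.contract a b c).faces τ =
      (linkVertices M.faces τ).image (collapse a b c) := by
  ext v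
  simp only [mem_linkVertices, Finset.mem_image]
  by_cases hv : v = c
  · subst hv
    rw [h.insert_mem_contract hc]
    constructor
    · rintro ⟨-, -, -, haτ | hbτ⟩
      exacts [⟨a, ⟨ha, haτ⟩, by simp [collapse]⟩, ⟨b, ⟨hb, hbτ⟩, by simp [collapse]⟩]
    · rintro ⟨w, ⟨-, hwM⟩, hw⟩
      have hwv : w ≠ v := fun hwv =>
        notMem_of_notMem_vertexSet h.fresh hwM (hwv ▸ Finset.mem_insert_self w τ)
      obtain rfl | rfl := (collapse_eq_iff hwv).1 hw
      exacts [⟨hc, ha, hb, .inl hwM⟩, ⟨hc, ha, hb, .inr hwM⟩]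
  · rw [mem_contract_of_notMem (by simp [hc, Ne.symm hv])]
    constructor
    · rintro ⟨hvτ, hvM, hav, hbv⟩
      refine ⟨v, ⟨hvτ, hvM⟩, if_neg ?_⟩
      grind
    · rintro ⟨w, ⟨hwτ, hwM⟩, rfl⟩
      have hwab : ¬(w = a ∨ w = b) := fun hw => hv (if_pos hw)
      rw [collapse, if_neg hwab]
      exact ⟨hwτ, hwM, by grind⟩

theorem linkVertices_contract_insert (h : M.IsContractible a b c) (hc : c ∉ τ) (ha : a ∉ τ)
    (hb : b ∉ τ) : linkVertices (M.contract a b c).faces (insert c τ) =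
      (linkVertices M.faces (insert a τ)).erase b ∪
        (linkVertices M.faces (insert b τ)).erase a := by
  ext v
  simp only [mem_linkVertices, Finset.mem_union, Finset.mem_erase, Finset.mem_insert, not_or,
    Finset.insert_comm v]
  by_cases hv : v = c
  · have hfresh {w : ℕ} : insert w (insert c τ) ∉ M.faces := fun hw =>
      notMem_of_notMem_vertexSet h.fresh hw (by simp)
    simp [hv, hfresh]
  · rw [h.insert_mem_contract (by simp [hc, Ne.symm hv])]
    grind

theorem card_linkVertices_contract_of_notMem (h : M.IsContractible a b c)
    (hM : M.IsNormalPseudomanifold d) (hτ : τ ∈ (M.contract a b c).faces) (hc : c ∉ τ)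
    (hcard : τ.card = d) : (linkVertices (M.contract a b c).faces τ).card = 2 := by
  rw [mem_contract_of_notMem hc] at hτ
  obtain ⟨hτM, ha, hb⟩ := hτ
  have hcV : c ∉ linkVertices M.faces τ := fun hcV =>
    notMem_of_notMem_vertexSet h.fresh (mem_linkVertices.1 hcV).2 (Finset.mem_insert_self c τ)
  have hab : a ∉ linkVertices M.faces τ ∨ b ∉ linkVertices M.faces τ := by
    by_contra! hab
    have habτ := hM.1.card_le
      (h.link τ ha hb (mem_linkVertices.1 hab.1).2 (mem_linkVertices.1 hab.2).2)
    rw [Finset.card_insert_of_notMem (by simp [h.ne, ha]), Finset.card_insert_of_notMem hb] at habτ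
    omega
  rw [h.linkVertices_contract_of_notMem hc ha hb,
    Finset.card_image_of_injOn (collapse_injOn hcV hab), hM.card_linkVertices hτM hcard]

theorem disjoint_linkVertices_erase (h : M.IsContractible a b c) (hM : M.IsPure d)
    (ha : a ∉ τ) (hb : b ∉ τ) (hcard : τ.card + 1 = d) :
    Disjoint ((linkVertices M.faces (insert a τ)).erase b)
      ((linkVertices M.faces (insert b τ)).erase a) := by
  rw [Finset.disjoint_left]
  intro x hxa hxb
  simp only [Finset.mem_erase, mem_linkVertices, Finset.mem_insert, not_or] at hxa hxb
  have haxτ : a ∉ insert x τ := by simp [hxb.1.symm, ha]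
  have hbxτ : b ∉ insert x τ := by simp [hxa.1.symm, hb]
  have hle := hM.card_le (h.link (insert x τ) haxτ hbxτ (Finset.insert_comm x a τ ▸ hxa.2.2)
    (Finset.insert_comm x b τ ▸ hxb.2.2))
  rw [Finset.card_insert_of_notMem (by simp [h.ne, haxτ]), Finset.card_insert_of_notMem hbxτ,
    Finset.card_insert_of_notMem hxa.2.1.2] at hle
  omega

theorem card_linkVertices_contract_insert (h : M.IsContractible a b c)
    (hM : M.IsNormalPseudomanifold d) (hτ : insert c τ ∈ (M.contract a b c).faces) (hc : c ∉ τ)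
    (hcard : (insert c τ).card = d) :
    (linkVertices (M.contract a b c).faces (insert c τ)).card = 2 := by
  obtain ⟨ha, hb, hab⟩ := (h.insert_mem_contract hc).1 hτ
  rw [Finset.card_insert_of_notMem hc] at hcard
  have htwo {v : ℕ} (hv : v ∉ τ) (hvτ : insert v τ ∈ M.faces) :
      (linkVertices M.faces (insert v τ)).card = 2 :=
    hM.card_linkVertices hvτ (by rw [Finset.card_insert_of_notMem hv, hcard])
  rw [h.linkVertices_contract_insert hc ha hb,
    Finset.card_union_of_disjoint (h.disjoint_linkVertices_erase hM.1 ha hb hcard)]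
  have hmema : b ∈ linkVertices M.faces (insert a τ) ↔ insert a (insert b τ) ∈ M.faces := by
    simp [mem_linkVertices, h.ne.symm, hb, Finset.insert_comm a b]
  have hmemb : a ∈ linkVertices M.faces (insert b τ) ↔ insert a (insert b τ) ∈ M.faces := by
    simp [mem_linkVertices, h.ne, ha]
  have hempty {v : ℕ} (hv : insert v τ ∉ M.faces) : linkVertices M.faces (insert v τ) = ∅ :=
    linkVertices_eq_empty hv (Finset.insert_nonempty v τ)
  by_cases habτ : insert a (insert b τ) ∈ M.faces
  · have haτ : insert a τ ∈ M.faces := mem_faces_of_subset habτ (by grind) (by simp)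
    have hbτ : insert b τ ∈ M.faces := mem_faces_of_subset habτ (by grind) (by simp)
    rw [Finset.card_erase_of_mem (hmema.2 habτ), Finset.card_erase_of_mem (hmemb.2 habτ),
      htwo ha haτ, htwo hb hbτ]
  · rw [Finset.erase_eq_of_notMem (hmema.not.2 habτ), Finset.erase_eq_of_notMem (hmemb.not.2 habτ)]
    rcases hab with haτ | hbτ
    · rw [htwo ha haτ, hempty fun hbτ => habτ (h.link τ ha hb haτ hbτ), Finset.card_empty]
    · rw [htwo hb hbτ, hempty fun haτ => habτ (h.link τ ha hb haτ hbτ), Finset.card_empty]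

theorem vertAdj_lk_contract_insert (h : M.IsContractible a b c) {p q : ℕ} (hc : c ∉ τ)
    (ha : a ∉ τ) (hb : b ∉ τ) (hp : p ≠ b) (hq : q ≠ b) (hpq : (M.lk (insert a τ)).VertAdj p q) :
    ((M.contract a b c).lk (insert c τ)).VertAdj p q := by
  rw [vertAdj_lk] at hpq ⊢
  obtain ⟨hpτ, hqτ, hmem⟩ := hpq
  have hcM := notMem_of_notMem_vertexSet h.fresh hmem
  simp only [Finset.mem_insert, not_or] at hpτ hqτ hcM ⊢
  have hcomm (v : ℕ) : insert p (insert q (insert v τ)) = insert v (insert p (insert q τ)) := by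
    rw [Finset.insert_comm q v, Finset.insert_comm p v]
  have hab : a ∉ insert p (insert q τ) ∧ b ∉ insert p (insert q τ) := by grind
  rw [hcomm, h.insert_mem_contract (by grind), ← hcomm]
  exact ⟨⟨Ne.symm hcM.1, hpτ.2⟩, ⟨Ne.symm hcM.2.1, hqτ.2⟩, hab.1, hab.2, .inl hmem⟩

theorem reflTransGen_lk_contract_insert (h : M.IsContractible a b c)
    (hM : M.IsNormalPseudomanifold d) (hc : c ∉ τ) (ha : a ∉ τ) (hb : b ∉ τ)
    (hcard : τ.card + 1 < d) {x y : ℕ} (hx : {x} ∈ (M.lk (insert a τ)).faces)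
    (hy : {y} ∈ (M.lk (insert a τ)).faces) (hxb : x ≠ b) (hyb : y ≠ b) :
    Relation.ReflTransGen ((M.contract a b c).lk (insert c τ)).VertAdj x y := by
  have hreach := hM.reachable_puncturedSkeleton_lk
    ((Finset.card_insert_le a τ).trans_lt hcard) hx hy hxb hyb
  rw [SimpleGraph.reachable_iff_reflTransGen] at hreach
  exact Relation.ReflTransGen.mono
    (fun p q hpq => h.vertAdj_lk_contract_insert hc ha hb hpq.2.1 hpq.2.2.1 hpq.2.2.2) _ _ hreach

theorem singleton_mem_lk_contract_insert (h : M.IsContractible a b c) {x : ℕ} (hc : c ∉ τ)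
    (ha : a ∉ τ) (hb : b ∉ τ) :
    {x} ∈ ((M.contract a b c).lk (insert c τ)).faces ↔
      ({x} ∈ (M.lk (insert a τ)).faces ∧ x ≠ b) ∨ ({x} ∈ (M.lk (insert b τ)).faces ∧ x ≠ a) := by
  simp only [← mem_vertexSet, vertexSet_lk, h.linkVertices_contract_insert hc ha hb,
    Finset.mem_union, Finset.mem_erase, and_comm]

/-- The links of `insert a τ` and `insert b τ`, punctured at `b` and `a`, cover the link of
`insert c τ`; any vertex completing `insert a (insert b τ)` to a larger face lies in both. -/
theorem preconn_lk_contract_insert (h : M.IsContractible a b c) (hM : M.IsNormalPseudomanifold d)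
    (hc : c ∉ τ) (ha : a ∉ τ) (hb : b ∉ τ) (hcard : τ.card + 1 < d) :
    ((M.contract a b c).lk (insert c τ)).Preconn := by
  have hleft {x y : ℕ} :=
    h.reflTransGen_lk_contract_insert hM hc ha hb hcard (x := x) (y := y)
  have hright {x y : ℕ} :=
    h.symm.reflTransGen_lk_contract_insert hM hc hb ha hcard (x := x) (y := y)
  rw [contract_comm] at hright
  have hbridge {x y : ℕ} (hx : {x} ∈ (M.lk (insert a τ)).faces)
      (hy : {y} ∈ (M.lk (insert b τ)).faces) : ∃ z ≠ a, z ≠ b ∧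
        {z} ∈ (M.lk (insert a τ)).faces ∧ {z} ∈ (M.lk (insert b τ)).faces := by
    have habτ := h.link τ ha hb
      (mem_faces_of_subset (singleton_mem_lk.1 hx).2 (Finset.subset_insert _ _) (by simp))
      (mem_faces_of_subset (singleton_mem_lk.1 hy).2 (Finset.subset_insert _ _) (by simp))
    have hcard' : (insert a (insert b τ)).card < d + 1 := by
      grind [Finset.card_insert_le]
    obtain ⟨φ, hφ⟩ := hM.1.exists_mem_starFacets habτ
    obtain ⟨z, -, hz⟩ := exists_singleton_mem_lk hcard' hφ
    simp only [singleton_mem_lk, Finset.mem_insert, not_or] at hz ⊢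
    exact ⟨z, hz.1.1, hz.1.2.1, ⟨⟨hz.1.1, hz.1.2.2⟩, mem_faces_of_subset hz.2 (by grind) (by simp)⟩,
      hz.1.2, mem_faces_of_subset hz.2 (by grind) (by simp)⟩
  intro x y hx hy
  rw [h.singleton_mem_lk_contract_insert hc ha hb] at hx hy
  rcases hx with ⟨hx, hxb⟩ | ⟨hx, hxa⟩ <;> rcases hy with ⟨hy, hyb⟩ | ⟨hy, hya⟩
  · exact hleft hx hy hxb hyb
  · obtain ⟨z, hza, hzb, hz, hz'⟩ := hbridge hx hy
    exact (hleft hx hz hxb hzb).trans (hright hz' hy hza hya)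
  · obtain ⟨z, hza, hzb, hz, hz'⟩ := hbridge hy hx
    exact (hright hx hz' hxa hza).trans (hleft hz hy hzb hyb)
  · exact hright hx hy hxa hya

theorem preconn_lk_contract_of_notMem (h : M.IsContractible a b c) (hlk : (M.lk s).Preconn)
    (hc : c ∉ s) (ha : a ∉ s) (hb : b ∉ s) : ((M.contract a b c).lk s).Preconn := by
  have hnotMem {p : ℕ} (hp : p ∉ s) : collapse a b c p ∉ s := by grind [collapse]
  have hadj : (M.lk s).VertAdj ≤ fun p q =>
      ((M.contract a b c).lk s).VertAdj (collapse a b c p) (collapse a b c q) := fun p q hpq => by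
    rw [vertAdj_lk] at hpq ⊢
    refine ⟨hnotMem hpq.1, hnotMem hpq.2.1, mem_contract.2 ⟨_, hpq.2.2, ?_⟩⟩
    rw [Finset.image_insert, Finset.image_insert, image_collapse_of_notMem ha hb]
  intro x y hx hy
  rw [← mem_vertexSet, vertexSet_lk, h.linkVertices_contract_of_notMem hc ha hb, ← vertexSet_lk,
    Finset.mem_image] at hx hy
  obtain ⟨x, hx, rfl⟩ := hx
  obtain ⟨y, hy, rfl⟩ := hy
  exact Relation.ReflTransGen.lift _ hadj _ _ (hlk x y (mem_vertexSet.1 hx) (mem_vertexSet.1 hy))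

theorem preconn_lk_contract (h : M.IsContractible a b c) (hM : M.IsNormalPseudomanifold d)
    (hs : s.card < d) : ((M.contract a b c).lk s).Preconn := by
  rcases s.eq_empty_or_nonempty with rfl | hne
  · exact h.preconn_lk_contract_of_notMem (hM.preconn_lk hs) (by simp) (by simp) (by simp)
  by_cases hsM : s ∈ (M.contract a b c).faces
  swap
  · exact preconn_lk_of_notMem hsM hne
  by_cases hc : c ∈ s
  · obtain ⟨τ, hcτ, rfl⟩ : ∃ τ, c ∉ τ ∧ insert c τ = s :=
      ⟨s.erase c, Finset.notMem_erase c s, Finset.insert_erase hc⟩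
    obtain ⟨ha, hb, -⟩ := (h.insert_mem_contract hcτ).1 hsM
    rw [Finset.card_insert_of_notMem hcτ] at hs
    exact h.preconn_lk_contract_insert hM hcτ ha hb hs
  · obtain ⟨-, ha, hb⟩ := (mem_contract_of_notMem hc).1 hsM
    exact h.preconn_lk_contract_of_notMem (hM.preconn_lk hs) hc ha hb

theorem isNormalPseudomanifold_contract (h : M.IsContractible a b c)
    (hM : M.IsNormalPseudomanifold d) : (M.contract a b c).IsNormalPseudomanifold d := by
  rw [isNormalPseudomanifold_iff_preconn_lk]
  refine ⟨h.isPure_contract hM, fun r hr hcard => ?_, fun s hs => h.preconn_lk_contract hM hs⟩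
  by_cases hc : c ∈ r
  · rw [← Finset.insert_erase hc] at hr hcard ⊢
    exact h.card_linkVertices_contract_insert hM hr (Finset.notMem_erase c r) hcard
  · exact h.card_linkVertices_contract_of_notMem hM hr hc hcard

end IsContractible
end Contraction

section ContractionMoves

/-- The faces of `M` that are left when the open stars of `a` and `b` are removed. -/
def facesAvoiding (M : SComplex) (a b : ℕ) : Finset (Finset ℕ) :=
  M.faces.filter fun α => a ∉ α ∧ b ∉ α

variable {M : SComplex} {a b c d : ℕ} {r s τ : Finset ℕ}

theorem mem_facesAvoiding : s ∈ M.facesAvoiding a b ↔ s ∈ M.faces ∧ a ∉ s ∧ b ∉ s :=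
  Finset.mem_filter

theorem linkVertices_facesAvoiding (ha : a ∉ s) (hb : b ∉ s) :
    linkVertices (M.facesAvoiding a b) s = linkVertices M.faces s \ {a, b} := by
  ext v
  simp only [mem_linkVertices, mem_facesAvoiding, Finset.mem_sdiff, Finset.mem_insert,
    Finset.mem_singleton]
  grind

theorem mem_bdryFaces_facesAvoiding :
    s ∈ bdryFaces (M.facesAvoiding a b) d ↔ s ∈ M.facesAvoiding a b ∧
      ∃ r ∈ M.facesAvoiding a b, s ⊆ r ∧ r.card = d ∧
        (linkVertices M.faces r \ {a, b}).card = 1 := by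
  simp only [bdryFaces, Finset.mem_filter]
  refine and_congr_right fun _ => exists_congr fun r => and_congr_right fun hr =>
    and_congr_right fun _ => and_congr_right fun hcard => ?_
  rw [card_filter_card_eq_and_subset _ hcard,
    linkVertices_facesAvoiding (mem_facesAvoiding.1 hr).2.1 (mem_facesAvoiding.1 hr).2.2]

theorem card_filter_card_eq_two (F : Finset (Finset ℕ)) (v : ℕ) :
    (F.filter (·.card = 2)).card =
      ((F.filter (v ∉ ·)).filter (·.card = 2)).card + (linkVertices F {v}).card := by
  rw [← card_filter_card_eq_and_subset F (Finset.card_singleton v), Finset.filter_comm,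
    ← Finset.filter_filter]
  simp only [Finset.singleton_subset_iff, Nat.reduceAdd]
  rw [← Finset.card_filter_add_card_filter_not (v ∉ ·)]
  simp only [not_not]

theorem insert_mem_coneFaces {F : Finset (Finset ℕ)} (hF : ∀ σ ∈ F, c ∉ σ) (hc : c ∉ τ) :
    insert c τ ∈ coneFaces c F ↔ τ ∈ F ∨ τ = ∅ := by
  simp only [coneFaces, Finset.mem_union, Finset.mem_image, Finset.mem_singleton]
  constructor
  · rintro ((hτ | ⟨σ, hσ, hστ⟩) | hτ)
    · exact absurd (Finset.mem_insert_self c τ) (hF _ hτ)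
    · rw [← Finset.erase_insert hc, ← hστ, Finset.erase_insert (hF σ hσ)]
      exact .inl hσ
    · rw [← Finset.erase_insert hc, hτ]
      simp
  · rintro (hτ | rfl)
    exacts [.inl (.inr ⟨τ, hτ, rfl⟩), .inr rfl]

theorem mem_coneFaces_of_notMem {F : Finset (Finset ℕ)} (hc : c ∉ τ) :
    τ ∈ coneFaces c F ↔ τ ∈ F := by
  simp only [coneFaces, Finset.mem_union, Finset.mem_image, Finset.mem_singleton]
  refine ⟨?_, fun hτ => .inl (.inl hτ)⟩
  rintro ((hτ | ⟨σ, -, rfl⟩) | rfl)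
  exacts [hτ, absurd (Finset.mem_insert_self c σ) hc, absurd (Finset.mem_singleton_self c) hc]

namespace IsContractible

/-- Two facets through a ridge `r` cannot be spanned by `a` and `b`: the link condition would make
`insert a (insert b r)` a face. -/
theorem card_linkVertices_sdiff (h : M.IsContractible a b c) (hM : M.IsNormalPseudomanifold d)
    (hr : r ∈ M.facesAvoiding a b) (hcard : r.card = d) (har : insert a r ∈ M.faces) :
    (linkVertices M.faces r \ {a, b}).card = 1 := by
  obtain ⟨hrM, ha, hb⟩ := mem_facesAvoiding.1 hr
  have hbV : b ∉ linkVertices M.faces r := fun hbV => by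
    have hle := hM.1.card_le (h.link r ha hb har (mem_linkVertices.1 hbV).2)
    rw [Finset.card_insert_of_notMem (by simp [h.ne, ha]), Finset.card_insert_of_notMem hb] at hle
    omega
  have heq : linkVertices M.faces r \ {a, b} = (linkVertices M.faces r).erase a := by grind
  rw [heq, Finset.card_erase_of_mem (mem_linkVertices.2 ⟨ha, har⟩), hM.card_linkVertices hrM hcard]

theorem mem_bdryFaces_of_insert_mem (h : M.IsContractible a b c) (hM : M.IsNormalPseudomanifold d)
    (hs : s ∈ M.facesAvoiding a b) (has : insert a s ∈ M.faces) :
    s ∈ bdryFaces (M.facesAvoiding a b) d := by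
  obtain ⟨hsM, ha, hb⟩ := mem_facesAvoiding.1 hs
  obtain ⟨φ, hφ, hbφ⟩ := hM.exists_mem_starFacets_notMem has (b := b) (by simp [h.ne.symm, hb])
  rw [mem_starFacets, Finset.insert_subset_iff] at hφ
  obtain ⟨hφM, hφcard, haφ, hsφ⟩ := hφ
  have hsr : s ⊆ φ.erase a := Finset.subset_erase.2 ⟨hsφ, ha⟩
  have hr : φ.erase a ∈ M.facesAvoiding a b := mem_facesAvoiding.2
    ⟨mem_faces_of_subset hφM (Finset.erase_subset a φ) ((nonempty_of_mem_faces hsM).mono hsr),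
      Finset.notMem_erase a φ, fun hb => hbφ (Finset.mem_of_mem_erase hb)⟩
  have hcard : (φ.erase a).card = d := by rw [Finset.card_erase_of_mem haφ, hφcard]; rfl
  exact mem_bdryFaces_facesAvoiding.2 ⟨hs, φ.erase a, hr, hsr, hcard,
    h.card_linkVertices_sdiff hM hr hcard (by rwa [Finset.insert_erase haφ])⟩

theorem mem_bdryFaces_iff (h : M.IsContractible a b c) (hM : M.IsNormalPseudomanifold d) :
    s ∈ bdryFaces (M.facesAvoiding a b) d ↔
      s ∈ M.facesAvoiding a b ∧ (insert a s ∈ M.faces ∨ insert b s ∈ M.faces) := by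
  constructor
  · intro hs
    obtain ⟨hs, r, hr, hsr, hcard, hone⟩ := mem_bdryFaces_facesAvoiding.1 hs
    obtain ⟨v, hv, hvab⟩ : ∃ v ∈ linkVertices M.faces r, v ∈ ({a, b} : Finset ℕ) := by
      by_contra! hv
      rw [Finset.sdiff_eq_self_of_disjoint (Finset.disjoint_left.2 hv),
        hM.card_linkVertices (mem_facesAvoiding.1 hr).1 hcard] at hone
      omega
    have hvs : insert v s ∈ M.faces := mem_faces_of_subset (mem_linkVertices.1 hv).2
      (Finset.insert_subset_insert v hsr) (Finset.insert_nonempty v s)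
    rw [Finset.mem_insert, Finset.mem_singleton] at hvab
    obtain rfl | rfl := hvab
    exacts [⟨hs, .inl hvs⟩, ⟨hs, .inr hvs⟩]
  · rintro ⟨hs, has | hbs⟩
    · exact h.mem_bdryFaces_of_insert_mem hM hs has
    · have hcomm : M.facesAvoiding a b = M.facesAvoiding b a :=
        Finset.filter_congr fun _ _ => and_comm
      rw [hcomm] at hs ⊢
      exact h.symm.mem_bdryFaces_of_insert_mem hM hs hbs

theorem faces_contract (h : M.IsContractible a b c) (hM : M.IsNormalPseudomanifold d) :
    (M.contract a b c).faces =
      M.facesAvoiding a b ∪ coneFaces c (bdryFaces (M.facesAvoiding a b) d) := by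
  have hbdry : bdryFaces (M.facesAvoiding a b) d ⊆ M.facesAvoiding a b := Finset.filter_subset _ _
  have hfresh (σ : Finset ℕ) (hσ : σ ∈ M.facesAvoiding a b) : c ∉ σ :=
    notMem_of_notMem_vertexSet h.fresh (mem_facesAvoiding.1 hσ).1
  ext τ
  rw [Finset.mem_union]
  by_cases hc : c ∈ τ
  · rw [or_iff_right fun hτ => hfresh τ hτ hc, ← Finset.insert_erase hc]
    have hcτ := Finset.notMem_erase c τ
    generalize τ.erase c = ρ at hcτ
    rw [h.insert_mem_contract hcτ, insert_mem_coneFaces (fun σ hσ => hfresh σ (hbdry hσ)) hcτ,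
      h.mem_bdryFaces_iff hM, mem_facesAvoiding]
    rcases ρ.eq_empty_or_nonempty with rfl | hρ
    · have ha : {a} ∈ M.faces := mem_faces_of_subset h.mem (by simp) (by simp)
      simp [ha]
    · have hmem {v : ℕ} (hv : insert v ρ ∈ M.faces) : ρ ∈ M.faces :=
        mem_faces_of_subset hv (Finset.subset_insert v ρ) hρ
      have hor (hab : insert a ρ ∈ M.faces ∨ insert b ρ ∈ M.faces) : ρ ∈ M.faces :=
        hab.elim hmem hmem
      grind
  · rw [mem_contract_of_notMem hc, ← mem_facesAvoiding, mem_coneFaces_of_notMem hc,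
      or_iff_left_of_imp fun hτ => hbdry hτ]

theorem faces_lk_inter (h : M.IsContractible a b c) :
    (M.lk {a}).faces ∩ (M.lk {b}).faces = (M.lk {a, b}).faces := by
  ext γ
  rw [Finset.mem_inter, mem_lk, mem_lk, mem_lk]
  simp only [Finset.disjoint_singleton_right, Finset.disjoint_insert_right, Finset.union_insert,
    Finset.union_singleton]
  constructor
  · rintro ⟨⟨hne, ha, haγ⟩, -, hb, hbγ⟩
    exact ⟨hne, ⟨ha, hb⟩, h.link γ ha hb haγ hbγ⟩
  · rintro ⟨hne, ⟨ha, hb⟩, habγ⟩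
    exact ⟨⟨hne, ha, mem_faces_of_subset habγ (by grind) (by simp)⟩,
      hne, hb, mem_faces_of_subset habγ (by grind) (by simp)⟩

theorem edgeContractionAt (h : M.IsContractible a b c) (hM : M.IsNormalPseudomanifold d) :
    EdgeContractionAt d M a b (M.contract a b c) :=
  ⟨h.mem, h.ne, h.faces_lk_inter, c, h.fresh, h.faces_contract hM⟩

theorem vertexSet_contract (h : M.IsContractible a b c) :
    (M.contract a b c).vertexSet = insert c (M.vertexSet \ {a, b}) := by
  have ha : {a} ∈ M.faces := mem_faces_of_subset h.mem (by simp) (by simp)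
  ext v
  by_cases hv : v = c
  · simpa [hv, mem_vertexSet, ha] using h.insert_mem_contract (τ := ∅)
  · rw [mem_vertexSet, mem_contract_of_notMem (by simp [Ne.symm hv])]
    simp [mem_vertexSet, hv, eq_comm]

theorem fnum_zero_contract (h : M.IsContractible a b c) :
    (M.contract a b c).fnum 0 + 1 = M.fnum 0 := by
  have hab := subset_vertexSet h.mem
  have hle := Finset.card_le_card hab
  rw [fnum_zero, fnum_zero, h.vertexSet_contract,
    Finset.card_insert_of_notMem (by simp [h.fresh]), Finset.card_sdiff_of_subset hab]
  rw [Finset.card_pair h.ne] at hle ⊢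
  omega

theorem card_linkVertices_contract_singleton (h : M.IsContractible a b c) :
    (linkVertices (M.contract a b c).faces {c}).card + M.deg {a, b} =
      ((linkVertices M.faces {a}).erase b).card + ((linkVertices M.faces {b}).erase a).card := by
  have hunion := h.linkVertices_contract_insert (Finset.notMem_empty c) (Finset.notMem_empty a)
    (Finset.notMem_empty b)
  have hinter : (linkVertices M.faces {a}).erase b ∩ (linkVertices M.faces {b}).erase a =
      linkVertices M.faces {a, b} := by
    rw [← vertexSet_lk M {a, b}]
    ext v
    rw [mem_vertexSet, ← h.faces_lk_inter, Finset.mem_inter, Finset.mem_inter, singleton_mem_lk,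
      singleton_mem_lk]
    simp only [Finset.mem_erase, mem_linkVertices, Finset.mem_singleton]
    tauto
  simp only [insert_empty_eq] at hunion
  rw [hunion, deg_eq_card_linkVertices, ← hinter, Finset.card_union_add_card_inter]

theorem fnum_one_contract (h : M.IsContractible a b c) :
    (M.contract a b c).fnum 1 + M.deg {a, b} + 1 = M.fnum 1 := by
  have hcontract : ((M.contract a b c).faces.filter (c ∉ ·)).filter (·.card = 2) =
      ((M.faces.filter (a ∉ ·)).filter (b ∉ ·)).filter (·.card = 2) := by
    ext τ
    simp only [Finset.mem_filter, and_assoc]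
    by_cases hc : c ∈ τ
    · simp only [hc, not_true_eq_false, false_and, and_false, false_iff]
      exact fun hτ => notMem_of_notMem_vertexSet h.fresh hτ.1 hc
    · simp only [mem_contract_of_notMem hc, hc, not_false_eq_true, true_and, and_assoc]
  have hb : linkVertices (M.faces.filter (a ∉ ·)) {b} = (linkVertices M.faces {b}).erase a := by
    ext v
    simp only [mem_linkVertices, Finset.mem_filter, Finset.mem_erase]
    grind [h.ne]
  have hmem : b ∈ linkVertices M.faces {a} :=
    mem_linkVertices.2 ⟨by simp [h.ne.symm], Finset.pair_comm a b ▸ h.mem⟩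
  have herase := Finset.card_erase_add_one hmem
  have hlink := h.card_linkVertices_contract_singleton
  rw [fnum, fnum, card_filter_card_eq_two _ c, hcontract, card_filter_card_eq_two M.faces a,
    card_filter_card_eq_two (M.faces.filter _) b, hb]
  omega

theorem g2_contract (h : M.IsContractible a b c) :
    (M.contract a b c).g2 = M.g2 + 3 - M.deg {a, b} := by
  have h0 := h.fnum_zero_contract
  have h1 := h.fnum_one_contract
  rw [g2, g2]
  omega

end IsContractible

end ContractionMoves

/-! ### Subdivision of an edge -/

section Subdivision

/-- The smallest simplex on the old vertices that contains the simplex `σ` of the subdivision at an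
interior point `b` of the edge `tw`, where the subdivision uses the name `a` for `t`. -/
def carrier (t w a b : ℕ) (σ : Finset ℕ) : Finset ℕ :=
  (if a ∈ σ then {t} else ∅) ∪ (if b ∈ σ then {t, w} else ∅) ∪ σ \ {a, b}

/-- The condition on a set `σ` to be a simplex of the subdivision, given that its carrier is a face:
the vertex `t` has been renamed `a`, and it is no longer adjacent to `w`. -/
def IsAdmissible (t w a : ℕ) (σ : Finset ℕ) : Prop := t ∉ σ ∧ ¬(a ∈ σ ∧ w ∈ σ)

instance (t w a : ℕ) : DecidablePred (IsAdmissible t w a) :=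
  fun _ => inferInstanceAs (Decidable (_ ∧ _))

variable {K : SComplex} {t w a b c u d : ℕ} {r s φ ψ σ Φ : Finset ℕ}

theorem mem_carrier {x : ℕ} : x ∈ carrier t w a b σ ↔
    (a ∈ σ ∧ x = t) ∨ (b ∈ σ ∧ (x = t ∨ x = w)) ∨ (x ∈ σ ∧ x ≠ a ∧ x ≠ b) := by
  simp only [carrier, Finset.mem_union, Finset.mem_sdiff, Finset.mem_insert, Finset.mem_singleton]
  grind

theorem carrier_mono : Monotone (carrier t w a b) := fun σ τ hστ x => by
  simp only [mem_carrier]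
  grind

theorem carrier_nonempty (hσ : σ.Nonempty) : (carrier t w a b σ).Nonempty := by
  obtain ⟨x, hx⟩ := hσ
  by_cases hxa : x = a
  · exact ⟨t, mem_carrier.2 (.inl ⟨hxa ▸ hx, rfl⟩)⟩
  by_cases hxb : x = b
  · exact ⟨t, mem_carrier.2 (.inr (.inl ⟨hxb ▸ hx, .inl rfl⟩))⟩
  · exact ⟨x, mem_carrier.2 (.inr (.inr ⟨hx, hxa, hxb⟩))⟩

theorem carrier_of_notMem (ha : a ∉ σ) (hb : b ∉ σ) : carrier t w a b σ = σ := by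
  ext x
  rw [mem_carrier]
  grind

theorem carrier_insert_left (hab : a ≠ b) (ha : a ∉ σ) (hb : b ∉ σ) :
    carrier t w a b (insert a σ) = insert t σ := by
  ext x
  rw [mem_carrier]
  grind

theorem carrier_insert_right (hab : a ≠ b) (ha : a ∉ σ) (hb : b ∉ σ) :
    carrier t w a b (insert b σ) = insert t (insert w σ) := by
  ext x
  rw [mem_carrier]
  grind

theorem carrier_insert_of_mem (hb : b ∈ σ) :
    carrier t w a b (insert a σ) = carrier t w a b σ := by
  ext x
  rw [mem_carrier, mem_carrier]
  grind

theorem IsAdmissible.anti (hσ : IsAdmissible t w a σ) (hs : s ⊆ σ) : IsAdmissible t w a s :=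
  ⟨fun h => hσ.1 (hs h), fun h => hσ.2 ⟨hs h.1, hs h.2⟩⟩

theorem IsAdmissible.card_carrier (hσ : IsAdmissible t w a σ) (hd : [t, w, a, b].Nodup) :
    (carrier t w a b σ).card = σ.card + if b ∈ σ ∧ a ∉ σ ∧ w ∉ σ then 1 else 0 := by
  simp only [List.nodup_cons, List.mem_cons, not_or] at hd
  obtain ⟨ht, haw⟩ := hσ
  have hinsert {ρ : Finset ℕ} (ha : a ∉ ρ) (hb : b ∉ ρ) :=
    carrier_insert_right (t := t) (w := w) hd.2.2.1.1 ha hb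
  by_cases ha : a ∈ σ
  · obtain ⟨ρ, ha', rfl⟩ : ∃ ρ, a ∉ ρ ∧ insert a ρ = σ :=
      ⟨σ.erase a, Finset.notMem_erase a σ, Finset.insert_erase ha⟩
    by_cases hb : b ∈ ρ
    · obtain ⟨ρ, hb', rfl⟩ : ∃ τ, b ∉ τ ∧ insert b τ = ρ :=
        ⟨ρ.erase b, Finset.notMem_erase b ρ, Finset.insert_erase hb⟩
      rw [carrier_insert_of_mem hb, hinsert (by grind) hb']
      grind
    · rw [carrier_insert_left hd.2.2.1.1 ha' hb]
      grind
  by_cases hb : b ∈ σ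
  · obtain ⟨ρ, hb', rfl⟩ : ∃ ρ, b ∉ ρ ∧ insert b ρ = σ :=
      ⟨σ.erase b, Finset.notMem_erase b σ, Finset.insert_erase hb⟩
    rw [hinsert (by grind) hb']
    grind
  · rw [carrier_of_notMem ha hb, if_neg (fun h => hb h.1), add_zero]

theorem IsAdmissible.card_le_card_carrier (hσ : IsAdmissible t w a σ) (hd : [t, w, a, b].Nodup) :
    σ.card ≤ (carrier t w a b σ).card :=
  hσ.card_carrier hd ▸ Nat.le_add_right _ _

theorem exists_isAdmissible_carrier_eq (hd : [t, w, a, b].Nodup) (hs : IsAdmissible t w a s)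
    (hsΦ : carrier t w a b s ⊆ Φ) (ha : a ∉ Φ) (hb : b ∉ Φ) :
    ∃ φ, s ⊆ φ ∧ IsAdmissible t w a φ ∧ carrier t w a b φ = Φ ∧ φ.card = Φ.card := by
  simp only [List.nodup_cons, List.mem_cons, not_or] at hd
  have hmem (x : ℕ) (hx : x ∈ carrier t w a b s) : x ∈ Φ := hsΦ hx
  simp only [mem_carrier] at hmem
  rw [IsAdmissible] at hs
  by_cases ht : t ∈ Φ
  swap
  · exact ⟨Φ, by grind, ⟨ht, fun h => ha h.1⟩, carrier_of_notMem ha hb, rfl⟩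
  have haΦ : a ∉ Φ.erase t := by simp [ha]
  have hbΦ : b ∉ Φ.erase t := by simp [hb]
  by_cases hwΦ : w ∈ Φ.erase t
  swap
  · refine ⟨insert a (Φ.erase t), by grind, by grind [IsAdmissible], ?_, ?_⟩
    · rw [carrier_insert_left hd.2.2.1.1 haΦ hbΦ, Finset.insert_erase ht]
    · rw [Finset.card_insert_of_notMem haΦ, Finset.card_erase_add_one ht]
  by_cases hws : w ∈ s
  · refine ⟨insert b (Φ.erase t), by grind, by grind [IsAdmissible], ?_, ?_⟩
    · rw [carrier_insert_right hd.2.2.1.1 haΦ hbΦ, Finset.insert_eq_of_mem hwΦ,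
        Finset.insert_erase ht]
    · rw [Finset.card_insert_of_notMem hbΦ, Finset.card_erase_add_one ht]
  · have haΦ' : a ∉ (Φ.erase t).erase w := by simp [ha]
    have hbΦ' : b ∉ (Φ.erase t).erase w := by simp [hb]
    refine ⟨insert a (insert b ((Φ.erase t).erase w)), by grind, by grind [IsAdmissible], ?_, ?_⟩
    · rw [carrier_insert_of_mem (Finset.mem_insert_self _ _),
        carrier_insert_right hd.2.2.1.1 haΦ' hbΦ', Finset.insert_erase hwΦ, Finset.insert_erase ht]
    · rw [Finset.card_insert_of_notMem (by grind), Finset.card_insert_of_notMem hbΦ',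
        Finset.card_erase_add_one hwΦ, Finset.card_erase_add_one ht]

/-- Only the two halves of a face through the edge `tw` have the same carrier; they share the face
opposite to `a`. -/
theorem IsAdmissible.eq_or_of_carrier_eq (hφ : IsAdmissible t w a φ) (hψ : IsAdmissible t w a ψ)
    (hd : [t, w, a, b].Nodup) (hφcard : (carrier t w a b φ).card = φ.card)
    (hψcard : (carrier t w a b ψ).card = ψ.card) (h : carrier t w a b φ = carrier t w a b ψ) :
    φ = ψ ∨ (φ ∩ ψ).card + 1 = φ.card ∧ a ∉ φ ∩ ψ ∧ b ∈ φ ∩ ψ ∧ w ∉ φ ∩ ψ := by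
  have hbφ : ¬(b ∈ φ ∧ a ∉ φ ∧ w ∉ φ) := fun h => by simp [hφ.card_carrier hd, h] at hφcard
  have hbψ : ¬(b ∈ ψ ∧ a ∉ ψ ∧ w ∉ ψ) := fun h => by simp [hψ.card_carrier hd, h] at hψcard
  have hcard : φ.card = ψ.card := by rw [← hφcard, ← hψcard, h]
  simp only [List.nodup_cons, List.mem_cons, not_or] at hd
  have hmem (x : ℕ) : x ∈ carrier t w a b φ ↔ x ∈ carrier t w a b ψ := by rw [h]
  simp only [mem_carrier] at hmem
  rw [IsAdmissible] at hφ hψ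
  have ht := hmem t
  have hw := hmem w
  by_cases ha : a ∈ φ ↔ a ∈ ψ
  · left
    ext x
    have := hmem x
    grind
  · right
    by_cases haφ : a ∈ φ
    · have hinter : φ ∩ ψ = φ.erase a := by
        ext x
        have := hmem x
        grind
      rw [hinter, Finset.card_erase_add_one haφ]
      grind
    · have haψ : a ∈ ψ := by grind
      have hinter : φ ∩ ψ = ψ.erase a := by
        ext x
        have := hmem x
        grind
      rw [hinter, hcard, Finset.card_erase_add_one haψ]
      grind

/-- The vertices `a` and `b` are available as the new names in the subdivision of the edge `tw` of
`K` (see `subdivide`). -/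
structure IsSubdivisible (K : SComplex) (t w a b : ℕ) : Prop where
  nodup : [t, w, a, b].Nodup
  mem : {t, w} ∈ K.faces
  fresh_left : a ∉ K.vertexSet
  fresh_right : b ∉ K.vertexSet

theorem exists_isSubdivisible (htw : t ≠ w) (h : {t, w} ∈ K.faces) :
    ∃ a b, K.IsSubdivisible t w a b := by
  obtain ⟨a, ha⟩ := Infinite.exists_notMem_finset K.vertexSet
  obtain ⟨b, hb⟩ := Infinite.exists_notMem_finset (insert a K.vertexSet)
  rw [Finset.mem_insert, not_or] at hb
  have ha' := notMem_of_notMem_vertexSet ha h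
  have hb' := notMem_of_notMem_vertexSet hb.2 h
  refine ⟨a, b, ?_, h, ha, hb.2⟩
  simp only [List.nodup_cons, List.mem_cons]
  grind

/-- The subdivision of `K` at an interior point `b` of the edge `tw`. The vertex `t` is renamed
`a`, so that `t` is a new vertex to which the edge `ab` of the subdivision can be contracted. -/
def subdivide (K : SComplex) (t w a b : ℕ) : SComplex where
  faces := (insert a (insert b K.vertexSet)).powerset.filter fun σ =>
    carrier t w a b σ ∈ K.faces ∧ IsAdmissible t w a σ
  not_empty_mem := by
    simp [carrier, K.not_empty_mem]
  down_closed := by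
    simp only [Finset.mem_filter, Finset.mem_powerset]
    rintro σ ⟨hσV, hσ, hadm⟩ s hs hne
    exact ⟨hs.trans hσV, mem_faces_of_subset hσ (carrier_mono hs)
      (carrier_nonempty (Finset.nonempty_iff_ne_empty.2 hne)), hadm.anti hs⟩

theorem mem_subdivide :
    σ ∈ (K.subdivide t w a b).faces ↔ carrier t w a b σ ∈ K.faces ∧ IsAdmissible t w a σ := by
  simp only [subdivide, Finset.mem_filter, Finset.mem_powerset, and_iff_right_iff_imp]
  intro hσ x hx
  by_contra hxV
  simp only [Finset.mem_insert, not_or] at hxV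
  exact hxV.2.2 (subset_vertexSet hσ.1 (mem_carrier.2 (.inr (.inr ⟨hx, hxV.1, hxV.2.1⟩))))

namespace IsSubdivisible

theorem notMem_left (h : K.IsSubdivisible t w a b) (hσ : σ ∈ K.faces) : a ∉ σ :=
  notMem_of_notMem_vertexSet h.fresh_left hσ

theorem notMem_right (h : K.IsSubdivisible t w a b) (hσ : σ ∈ K.faces) : b ∉ σ :=
  notMem_of_notMem_vertexSet h.fresh_right hσ

theorem exists_mem_starFacets_carrier_eq (h : K.IsSubdivisible t w a b)
    (hs : IsAdmissible t w a s) (hΦ : Φ ∈ K.starFacets d (carrier t w a b s)) :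
    ∃ φ ∈ (K.subdivide t w a b).starFacets d s, carrier t w a b φ = Φ := by
  rw [mem_starFacets] at hΦ
  obtain ⟨φ, hsφ, hφ, rfl, hcard⟩ := exists_isAdmissible_carrier_eq h.nodup hs hΦ.2.2
    (h.notMem_left hΦ.1) (h.notMem_right hΦ.1)
  exact ⟨φ, mem_starFacets.2 ⟨mem_subdivide.2 ⟨hΦ.1, hφ⟩, hcard.trans hΦ.2.1, hsφ⟩, rfl⟩

theorem isPure_subdivide (h : K.IsSubdivisible t w a b) (hK : K.IsPure d) :
    (K.subdivide t w a b).IsPure d := by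
  refine isPure_of_exists_mem_starFacets ?_ fun σ hσ => ?_
  · have hd := h.nodup
    simp only [List.nodup_cons, List.mem_cons, not_or] at hd
    refine ⟨{b}, mem_subdivide.2 ⟨?_, ?_⟩⟩
    · rw [← insert_empty_eq, carrier_insert_right hd.2.2.1.1 (by simp) (by simp)]
      exact h.mem
    · grind [IsAdmissible]
  · rw [mem_subdivide] at hσ
    obtain ⟨Φ, hΦ⟩ := hK.exists_mem_starFacets hσ.1
    obtain ⟨φ, hφ, -⟩ := h.exists_mem_starFacets_carrier_eq hσ.2 hΦ
    exact ⟨φ, hφ⟩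

theorem card_carrier_of_mem_starFacets (h : K.IsSubdivisible t w a b) (hK : K.IsPure d)
    (hφ : φ ∈ (K.subdivide t w a b).starFacets d s) :
    (carrier t w a b φ).card = d + 1 := by
  rw [mem_starFacets, mem_subdivide] at hφ
  exact (hK.card_le hφ.1.1).antisymm (hφ.2.1 ▸ hφ.1.2.card_le_card_carrier h.nodup)

theorem carrier_mem_starFacets (h : K.IsSubdivisible t w a b) (hK : K.IsPure d)
    (hφ : φ ∈ (K.subdivide t w a b).starFacets d s) :
    carrier t w a b φ ∈ K.starFacets d (carrier t w a b s) := by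
  have hcard := h.card_carrier_of_mem_starFacets hK hφ
  rw [mem_starFacets, mem_subdivide] at hφ
  exact mem_starFacets.2 ⟨hφ.1.1, hcard, carrier_mono hφ.2.2⟩

theorem eq_or_of_mem_starFacets (h : K.IsSubdivisible t w a b) (hK : K.IsPure d)
    (hφ : φ ∈ (K.subdivide t w a b).starFacets d s)
    (hψ : ψ ∈ (K.subdivide t w a b).starFacets d s) (hφψ : carrier t w a b φ = carrier t w a b ψ) :
    φ = ψ ∨ (φ ∩ ψ).card = d ∧ a ∉ φ ∩ ψ ∧ b ∈ φ ∩ ψ ∧ w ∉ φ ∩ ψ := by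
  have hcφ := h.card_carrier_of_mem_starFacets hK hφ
  have hcψ := h.card_carrier_of_mem_starFacets hK hψ
  rw [mem_starFacets, mem_subdivide] at hφ hψ
  have := hφ.1.2.eq_or_of_carrier_eq hψ.1.2 h.nodup (hcφ.trans hφ.2.1.symm)
    (hcψ.trans hψ.2.1.symm) hφψ
  rwa [hφ.2.1, Nat.add_right_cancel_iff] at this

theorem starAdj_of_carrier_eq (h : K.IsSubdivisible t w a b) (hK : K.IsPure d)
    (hφ : φ ∈ (K.subdivide t w a b).starFacets d s)
    (hψ : ψ ∈ (K.subdivide t w a b).starFacets d s) (hφψ : carrier t w a b φ = carrier t w a b ψ) :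
    (K.subdivide t w a b).StarAdj d s φ ψ := by
  refine ⟨hφ, hψ, ?_⟩
  obtain rfl | ⟨hcard, -⟩ := h.eq_or_of_mem_starFacets hK hφ hψ hφψ
  · rw [Finset.inter_self, (mem_starFacets.1 hφ).2.1]
    exact Nat.le_succ d
  · exact hcard.ge

theorem exists_starAdj_carrier_eq (h : K.IsSubdivisible t w a b) (hs : IsAdmissible t w a s)
    {Ψ : Finset ℕ} (hΦΨ : K.StarAdj d (carrier t w a b s) Φ Ψ) :
    ∃ φ ψ, (K.subdivide t w a b).StarAdj d s φ ψ ∧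
      carrier t w a b φ = Φ ∧ carrier t w a b ψ = Ψ := by
  obtain ⟨hΦ, hΨ, hcard⟩ := hΦΨ
  have hΦ' := mem_starFacets.1 hΦ
  have hΨ' := mem_starFacets.1 hΨ
  obtain ⟨ρ, hsρ, hρ, hρc, hρcard⟩ := exists_isAdmissible_carrier_eq h.nodup hs
    (Finset.subset_inter hΦ'.2.2 hΨ'.2.2)
    (fun ha => h.notMem_left hΦ'.1 (Finset.mem_of_mem_inter_left ha))
    (fun hb => h.notMem_right hΦ'.1 (Finset.mem_of_mem_inter_left hb))
  obtain ⟨φ, hφ, hφΦ⟩ := h.exists_mem_starFacets_carrier_eq hρ (mem_starFacets.2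
    ⟨hΦ'.1, hΦ'.2.1, hρc.trans_subset Finset.inter_subset_left⟩)
  obtain ⟨ψ, hψ, hψΨ⟩ := h.exists_mem_starFacets_carrier_eq hρ (mem_starFacets.2
    ⟨hΨ'.1, hΨ'.2.1, hρc.trans_subset Finset.inter_subset_right⟩)
  refine ⟨φ, ψ, ⟨starFacets_anti hsρ hφ, starFacets_anti hsρ hψ, ?_⟩, hφΦ, hψΨ⟩
  exact (hcard.trans_eq hρcard.symm).trans (Finset.card_le_card
    (Finset.subset_inter (mem_starFacets.1 hφ).2.2 (mem_starFacets.1 hψ).2.2))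

theorem starConnected_subdivide (h : K.IsSubdivisible t w a b) (hK : K.IsPure d)
    (hstar : K.StarConnected d (carrier t w a b s)) :
    (K.subdivide t w a b).StarConnected d s := by
  intro φ hφ ψ hψ
  have hs : IsAdmissible t w a s :=
    (mem_subdivide.1 (mem_starFacets.1 hφ).1).2.anti (mem_starFacets.1 hφ).2.2
  have hpath := hstar _ (h.carrier_mem_starFacets hK hφ) _ (h.carrier_mem_starFacets hK hψ)
  generalize hΨ : carrier t w a b ψ = Ψ at hpath
  induction hpath generalizing ψ with
  | refl => exact .single (h.starAdj_of_carrier_eq hK hφ hψ hΨ.symm)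
  | tail _ hadj ih =>
    obtain ⟨φ', ψ', hadj', hφ', hψ'⟩ := h.exists_starAdj_carrier_eq hs hadj
    exact ((ih φ' hadj'.1 hφ').tail hadj').tail
      (h.starAdj_of_carrier_eq hK hadj'.2.1 hψ (hψ'.trans hΨ.symm))

theorem card_linkVertices_subdivide (h : K.IsSubdivisible t w a b)
    (hK : K.IsNormalPseudomanifold d) (hr : r ∈ (K.subdivide t w a b).faces) (hcard : r.card = d)
    (hrb : ¬(b ∈ r ∧ a ∉ r ∧ w ∉ r)) :
    (linkVertices (K.subdivide t w a b).faces r).card = 2 := by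
  have hr' := mem_subdivide.1 hr
  have hcarrier : (carrier t w a b r).card = d := by
    rw [hr'.2.card_carrier h.nodup, if_neg hrb, hcard, add_zero]
  rw [← hK.card_linkVertices hr'.1 hcarrier, ← card_filter_card_eq_and_subset _ hcard,
    ← card_filter_card_eq_and_subset _ hcarrier]
  refine Finset.card_bij (fun φ _ => carrier t w a b φ)
    (fun φ hφ => h.carrier_mem_starFacets hK.1 hφ) (fun φ hφ ψ hψ hφψ => ?_) fun Φ hΦ => ?_
  · refine (h.eq_or_of_mem_starFacets hK.1 hφ hψ hφψ).resolve_right fun ⟨hinter, ha, hb, hw⟩ => ?_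
    have hrφψ : r = φ ∩ ψ := Finset.eq_of_subset_of_card_le
      (Finset.subset_inter (mem_starFacets.1 hφ).2.2 (mem_starFacets.1 hψ).2.2)
      (by rw [hinter, hcard])
    exact hrb (hrφψ ▸ ⟨hb, ha, hw⟩)
  · obtain ⟨φ, hφ, rfl⟩ := h.exists_mem_starFacets_carrier_eq hr'.2 hΦ
    exact ⟨φ, hφ, rfl⟩

/-- A ridge through `b` in the interior of a facet of `K` separates the two halves of the facet. -/
theorem linkVertices_subdivide_eq_pair (h : K.IsSubdivisible t w a b) (hK : K.IsPure d)
    (hr : r ∈ (K.subdivide t w a b).faces) (hcard : r.card = d)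
    (hrb : b ∈ r ∧ a ∉ r ∧ w ∉ r) : linkVertices (K.subdivide t w a b).faces r = {a, w} := by
  rw [mem_subdivide] at hr
  have hcarrier : (carrier t w a b r).card = d + 1 := by
    rw [hr.2.card_carrier h.nodup, if_pos hrb, hcard]
  have hd := h.nodup
  simp only [List.nodup_cons, List.mem_cons, not_or] at hd
  ext v
  rw [mem_linkVertices, mem_subdivide, Finset.mem_insert, Finset.mem_singleton]
  constructor
  · rintro ⟨hv, hvr, hadm⟩
    have heq : carrier t w a b r = carrier t w a b (insert v r) :=
      Finset.eq_of_subset_of_card_le (carrier_mono (Finset.subset_insert v r))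
        (hcarrier ▸ hK.card_le hvr)
    have hmem : v ∈ carrier t w a b (insert v r) → v ∈ carrier t w a b r := by rw [heq]; exact id
    simp only [mem_carrier] at hmem
    grind [IsAdmissible]
  · rintro (rfl | rfl)
    · refine ⟨hrb.2.1, carrier_insert_of_mem hrb.1 ▸ hr.1, ?_⟩
      grind [IsAdmissible]
    · have heq : carrier t v a b (insert v r) = carrier t v a b r := by
        ext x
        simp only [mem_carrier]
        grind
      refine ⟨hrb.2.2, heq ▸ hr.1, ?_⟩
      grind [IsAdmissible]

theorem isNormalPseudomanifold_subdivide (h : K.IsSubdivisible t w a b)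
    (hK : K.IsNormalPseudomanifold d) : (K.subdivide t w a b).IsNormalPseudomanifold d := by
  have hK' := isNormalPseudomanifold_iff_starConnected.1 hK
  refine isNormalPseudomanifold_iff_starConnected.2 ⟨h.isPure_subdivide hK.1,
    fun r hr hcard => ?_, fun s => h.starConnected_subdivide hK.1 (hK'.2.2 _)⟩
  by_cases hrb : b ∈ r ∧ a ∉ r ∧ w ∉ r
  · have haw : a ≠ w := by
      rintro rfl
      simpa using h.nodup
    rw [h.linkVertices_subdivide_eq_pair hK.1 hr hcard hrb, Finset.card_pair haw]
  · exact h.card_linkVertices_subdivide hK hr hcard hrb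

end IsSubdivisible

end Subdivision

/-! ### Contractions of a subdivision -/

section SubdivisionContraction

variable {K : SComplex} {t w a b c u d : ℕ} {σ : Finset ℕ}

namespace IsSubdivisible

theorem insert_left_mem_subdivide (h : K.IsSubdivisible t w a b) (ha : a ∉ σ) (hb : b ∉ σ) :
    insert a σ ∈ (K.subdivide t w a b).faces ↔ insert t σ ∈ K.faces ∧ t ∉ σ ∧ w ∉ σ := by
  have hd := h.nodup
  simp only [List.nodup_cons, List.mem_cons, not_or] at hd
  rw [mem_subdivide, carrier_insert_left hd.2.2.1.1 ha hb]
  grind [IsAdmissible]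

theorem insert_right_mem_subdivide (h : K.IsSubdivisible t w a b) (ha : a ∉ σ) (hb : b ∉ σ) :
    insert b σ ∈ (K.subdivide t w a b).faces ↔ insert t (insert w σ) ∈ K.faces ∧ t ∉ σ := by
  have hd := h.nodup
  simp only [List.nodup_cons, List.mem_cons, not_or] at hd
  rw [mem_subdivide, carrier_insert_right hd.2.2.1.1 ha hb]
  grind [IsAdmissible]

theorem insert_left_insert_right_mem_subdivide (h : K.IsSubdivisible t w a b) (ha : a ∉ σ)
    (hb : b ∉ σ) : insert a (insert b σ) ∈ (K.subdivide t w a b).faces ↔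
      insert t (insert w σ) ∈ K.faces ∧ t ∉ σ ∧ w ∉ σ := by
  have hd := h.nodup
  simp only [List.nodup_cons, List.mem_cons, not_or] at hd
  rw [mem_subdivide, carrier_insert_of_mem (Finset.mem_insert_self b σ),
    carrier_insert_right hd.2.2.1.1 ha hb]
  grind [IsAdmissible]

theorem isContractible_subdivide (h : K.IsSubdivisible t w a b) :
    (K.subdivide t w a b).IsContractible a b t where
  ne := by
    have hd := h.nodup
    simp only [List.nodup_cons, List.mem_cons, not_or] at hd
    exact hd.2.2.1.1
  mem := by
    rw [← insert_empty_eq, h.insert_left_insert_right_mem_subdivide (by simp) (by simp)]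
    exact ⟨h.mem, by simp, by simp⟩
  link γ ha hb haγ hbγ := by
    rw [h.insert_left_mem_subdivide ha hb] at haγ
    rw [h.insert_right_mem_subdivide ha hb] at hbγ
    exact (h.insert_left_insert_right_mem_subdivide ha hb).2 ⟨hbγ.1, haγ.2⟩
  fresh ht := (mem_subdivide.1 (mem_vertexSet.1 ht)).2.1 (Finset.mem_singleton_self t)

theorem contract_subdivide (h : K.IsSubdivisible t w a b) :
    (K.subdivide t w a b).contract a b t = K := by
  refine ext_faces (Finset.ext fun τ => ?_)
  by_cases ht : t ∈ τ
  · obtain ⟨ρ, htρ, rfl⟩ : ∃ ρ, t ∉ ρ ∧ insert t ρ = τ :=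
      ⟨τ.erase t, Finset.notMem_erase t τ, Finset.insert_erase ht⟩
    rw [h.isContractible_subdivide.insert_mem_contract htρ]
    constructor
    · rintro ⟨ha, hb, haρ | hbρ⟩
      · exact ((h.insert_left_mem_subdivide ha hb).1 haρ).1
      · exact mem_faces_of_subset ((h.insert_right_mem_subdivide ha hb).1 hbρ).1
          (Finset.insert_subset_insert t (Finset.subset_insert w ρ)) (Finset.insert_nonempty t ρ)
    · intro hρ
      have ha := fun ha => h.notMem_left hρ (Finset.mem_insert_of_mem ha)
      have hb := fun hb => h.notMem_right hρ (Finset.mem_insert_of_mem hb)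
      rw [h.insert_left_mem_subdivide ha hb, h.insert_right_mem_subdivide ha hb]
      refine ⟨ha, hb, ?_⟩
      by_cases hw : w ∈ ρ
      · exact .inr ⟨by rwa [Finset.insert_eq_of_mem hw], htρ⟩
      · exact .inl ⟨hρ, htρ, hw⟩
  · rw [mem_contract_of_notMem ht, mem_subdivide]
    constructor
    · rintro ⟨⟨hτ, -⟩, ha, hb⟩
      rwa [carrier_of_notMem ha hb] at hτ
    · intro hτ
      have ha := h.notMem_left hτ
      have hb := h.notMem_right hτ
      rw [carrier_of_notMem ha hb]
      exact ⟨⟨hτ, ht, fun hw => ha hw.1⟩, ha, hb⟩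

theorem deg_subdivide_left_right (h : K.IsSubdivisible t w a b) :
    (K.subdivide t w a b).deg {a, b} = K.deg {t, w} := by
  rw [deg_eq_card_linkVertices, deg_eq_card_linkVertices]
  congr 1
  ext v
  rw [mem_linkVertices_pair, mem_linkVertices_pair]
  constructor
  · rintro ⟨hva, hvb, hv⟩
    rw [h.insert_left_insert_right_mem_subdivide (by simp [hva.symm]) (by simp [hvb.symm]),
      Finset.mem_singleton, Finset.mem_singleton] at hv
    exact ⟨Ne.symm hv.2.1, Ne.symm hv.2.2, hv.1⟩
  · rintro ⟨hvt, hvw, hv⟩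
    have ha := h.notMem_left (mem_faces_of_subset hv (s := {v}) (by simp) (by simp))
    have hb := h.notMem_right (mem_faces_of_subset hv (s := {v}) (by simp) (by simp))
    rw [h.insert_left_insert_right_mem_subdivide ha hb]
    exact ⟨fun hva => ha (by simp [hva]), fun hvb => hb (by simp [hvb]), hv, by simp [hvt.symm],
      by simp [hvw.symm]⟩

section Neighbor

variable (h : K.IsSubdivisible t w a b) (htu : {t, u} ∈ K.faces) (htuw : {t, u, w} ∉ K.faces)
include h htu htuw

theorem right_notMem_of_insert_mem_subdivide
    (hσ : insert u σ ∈ (K.subdivide t w a b).faces) : b ∉ insert u σ := by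
  intro hb
  have hua : u ≠ a := by
    rintro rfl
    exact h.notMem_left htu (by simp)
  have hub : u ≠ b := by
    rintro rfl
    exact h.notMem_right htu (by simp)
  refine htuw (mem_faces_of_subset (mem_subdivide.1 hσ).1 (fun x => ?_) (by simp))
  rw [mem_carrier, Finset.mem_insert, Finset.mem_insert, Finset.mem_singleton]
  grind

theorem insert_left_insert_mem_subdivide (ha : a ∉ σ) :
    insert a (insert u σ) ∈ (K.subdivide t w a b).faces ↔
      insert t (insert u σ) ∈ K.faces ∧ t ∉ σ := by
  have hau : a ∉ insert u σ := by
    have := h.notMem_left htu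
    grind
  have hut : u ≠ t := by
    rintro rfl
    exact htuw (by simpa using h.mem)
  constructor
  · intro hσ
    have hb := h.right_notMem_of_insert_mem_subdivide htu htuw
      (Finset.insert_comm a u σ ▸ hσ)
    rw [h.insert_left_mem_subdivide hau (by grind)] at hσ
    exact ⟨hσ.1, by grind⟩
  · rintro ⟨hσ, ht⟩
    have hw : w ∉ insert u σ := fun hw => htuw (mem_faces_of_subset hσ (by grind) (by simp))
    have hb := h.notMem_right hσ
    rw [h.insert_left_mem_subdivide hau (by grind)]
    exact ⟨hσ, by grind, hw⟩

theorem deg_subdivide_left : (K.subdivide t w a b).deg {a, u} = K.deg {t, u} := by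
  rw [deg_eq_card_linkVertices, deg_eq_card_linkVertices]
  congr 1
  ext v
  rw [mem_linkVertices_pair, mem_linkVertices_pair]
  constructor
  · rintro ⟨hva, hvu, hv⟩
    rw [h.insert_left_insert_mem_subdivide htu htuw (by simp [hva.symm]),
      Finset.mem_singleton] at hv
    exact ⟨Ne.symm hv.2, hvu, hv.1⟩
  · rintro ⟨hvt, hvu, hv⟩
    have ha := h.notMem_left (mem_faces_of_subset hv (s := {v}) (by simp) (by simp))
    rw [h.insert_left_insert_mem_subdivide htu htuw ha]
    exact ⟨fun hva => ha (by simp [hva]), hvu, hv, by simp [hvt.symm]⟩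

theorem isContractible_subdivide_left
    (hlink : ∀ γ, t ∉ γ → u ∉ γ → w ∉ γ → insert t γ ∈ K.faces → insert u γ ∈ K.faces →
      insert t (insert u γ) ∈ K.faces) (hc : c ∉ (K.subdivide t w a b).vertexSet) :
    (K.subdivide t w a b).IsContractible a u c where
  ne := by
    rintro rfl
    exact h.notMem_left htu (by simp)
  mem := by
    rw [← insert_empty_eq u, h.insert_left_insert_mem_subdivide htu htuw (Finset.notMem_empty a)]
    exact ⟨htu, Finset.notMem_empty t⟩
  link γ ha hu haγ huγ := by
    have hb := h.right_notMem_of_insert_mem_subdivide htu htuw huγ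
    have hau : a ∉ insert u γ := by
      have := h.notMem_left htu
      grind
    rw [h.insert_left_mem_subdivide ha (by grind)] at haγ
    rw [mem_subdivide, carrier_of_notMem hau hb] at huγ
    rw [h.insert_left_insert_mem_subdivide htu htuw ha]
    exact ⟨hlink γ haγ.2.1 hu haγ.2.2 haγ.1 huγ.1, haγ.2.1⟩
  fresh := hc

end Neighbor

end IsSubdivisible

end SubdivisionContraction

/-! ### Edges violating the link condition -/

/-- The faces obstructing the contraction of the edge `tu`: those in the links of both `t` and `u`
but not in the link of `tu`. -/
def linkDefect (K : SComplex) (t u : ℕ) : Finset (Finset ℕ) :=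
  ((K.lk {t}).faces ∩ (K.lk {u}).faces) \ (K.lk {t, u}).faces

section LinkDefect

variable {K : SComplex} {t u w : ℕ}

theorem linkDefect_comm (K : SComplex) (t u : ℕ) : K.linkDefect t u = K.linkDefect u t := by
  rw [linkDefect, linkDefect, Finset.inter_comm, Finset.pair_comm]

theorem mem_linkDefect {γ : Finset ℕ} : γ ∈ K.linkDefect t u ↔
    γ.Nonempty ∧ (t ∉ γ ∧ insert t γ ∈ K.faces) ∧ (u ∉ γ ∧ insert u γ ∈ K.faces) ∧
      insert t (insert u γ) ∉ K.faces := by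
  simp only [linkDefect, Finset.mem_sdiff, Finset.mem_inter, mem_lk, Finset.disjoint_insert_right,
    Finset.disjoint_singleton_right, Finset.union_insert, Finset.union_singleton]
  tauto

theorem deg_le_deg_of_forall_mem_linkDefect (hK : K.IsNormalPseudomanifold 3)
    (hmin : ∀ K' : SComplex, K'.IsNormalPseudomanifold 3 →
      (∃ M, EdgeContraction M K ∧ EdgeContraction M K') → K.g2 ≤ K'.g2)
    (htu : {t, u} ∈ K.faces) (hw : {w} ∈ K.linkDefect t u)
    (hmem : ∀ γ ∈ K.linkDefect t u, w ∈ γ) : K.deg {t, u} ≤ K.deg {t, w} := by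
  obtain ⟨-, ⟨htw, htwK⟩, -, htuw⟩ := mem_linkDefect.1 hw
  have hlink : ∀ γ, t ∉ γ → u ∉ γ → w ∉ γ → insert t γ ∈ K.faces → insert u γ ∈ K.faces →
      insert t (insert u γ) ∈ K.faces := fun γ ht hu hwγ htγ huγ => by
    obtain rfl | hγ := γ.eq_empty_or_nonempty
    · exact htu
    · by_contra htuγ
      exact hwγ (hmem γ (mem_linkDefect.2 ⟨hγ, ⟨ht, htγ⟩, ⟨hu, huγ⟩, htuγ⟩))
  obtain ⟨a, b, h⟩ := exists_isSubdivisible (Finset.notMem_singleton.1 htw) htwK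
  obtain ⟨c, hc⟩ := Infinite.exists_notMem_finset (K.subdivide t w a b).vertexSet
  have hM := h.isNormalPseudomanifold_subdivide hK
  have hab := h.isContractible_subdivide
  have hau := h.isContractible_subdivide_left htu htuw hlink hc
  have hMK := hab.edgeContractionAt hM
  have hg2 := hab.g2_contract
  rw [h.contract_subdivide] at hMK hg2
  have hle := hmin _ (hau.isNormalPseudomanifold_contract hM)
    ⟨_, ⟨a, b, hMK⟩, a, u, hau.edgeContractionAt hM⟩
  rw [h.deg_subdivide_left_right] at hg2
  rw [hau.g2_contract, h.deg_subdivide_left htu htuw] at hle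
  omega

end LinkDefect

theorem statement6_general (K : SComplex) (t u w : ℕ) (hK : K.IsNormalPseudomanifold 3)
    (hmin : ∀ K' : SComplex, K'.IsNormalPseudomanifold 3 →
      (∃ M, EdgeContraction M K ∧ EdgeContraction M K') → K.g2 ≤ K'.g2)
    (htu : {t, u} ∈ K.faces) (hw : {w} ∈ K.linkDefect t u)
    (hmem : ∀ γ ∈ K.linkDefect t u, w ∈ γ) :
    K.deg {t, u} ≤ K.deg {t, w} ∧ K.deg {t, u} ≤ K.deg {u, w} := by
  refine ⟨deg_le_deg_of_forall_mem_linkDefect hK hmin htu hw hmem, ?_⟩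
  rw [linkDefect_comm] at hw hmem
  rw [Finset.pair_comm] at htu ⊢
  exact deg_le_deg_of_forall_mem_linkDefect hK hmin htu hw hmem

/-- Lemma 3.7: bounds on degrees when `lk(t) ∩ lk(u) − lk(ut)` is a single vertex
`{w}` or a half-open edge `(t₁, w]` with `t₁ ∈ lk(ut)` singular. -/
theorem statement6 (K : SComplex) (t u w t₁ : ℕ) (hK : InClassR K)
    (ht : K.IsSingular t)
    (hu : ({u} : Finset ℕ) ∈ (K.lk {t}).faces) (huns : K.HasSphereLink 3 u)
    (ht₁mem : ({t₁} : Finset ℕ) ∈ (K.lk {t, u}).faces) (ht₁sing : K.IsSingular t₁)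
    (hS : ((K.lk {t}).faces ∩ (K.lk {u}).faces) \ (K.lk {t, u}).faces
            = ({{w}} : Finset (Finset ℕ)) ∨
          ((K.lk {t}).faces ∩ (K.lk {u}).faces) \ (K.lk {t, u}).faces
            = ({{w}, {t₁, w}} : Finset (Finset ℕ))) :
    K.deg {t, u} ≤ K.deg {t, w} ∧ K.deg {t, u} ≤ K.deg {u, w} := by
  refine statement6_general K t u w hK.1 (fun K' hK' h => hK.2.2.2.2 K' hK' (.inr (.inr (.inr h))))
    (Finset.pair_comm t u ▸ (singleton_mem_lk.1 hu).2) ?_ ?_ <;>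
  rcases hS with hS | hS <;> simp [linkDefect, hS]

end SComplex
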